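/- arXiv:1710.04293 — 3 statements merged into one kernel-verified Lean document; each statement's English description precedes it below -/
import Mathlib

section
/- Let B ⊆ K be the k-subalgebra of the Koszul complex K generated by 1 and all products z_{a,b} · z_{a',b'} of two cycles z_{a,b}, z_{a',b'} (over all lengths and all sequences of variables a, b, a', b'), and let B_t := B ∩ K_t. Then for every t ≥ 0, every Koszul cycle c ∈ ker(d_t) all of whose homogeneous components have even internal degree (an element of S_e ⊗_k ⋀^t S_2 has internal degree e + 2t) can be written as c = u + d_{t+1}(w) with u ∈ B_t and w ∈ K_{t+1}. Consequently, the Koszul homology algebra of the second Veronese subalgebra S^(2) = ⊕_d S_{2d} is generated by its lowest linear strand. -/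
set_option maxHeartbeats 1000000
set_option synthInstance.maxHeartbeats 400000

open scoped TensorProduct
open MvPolynomial

noncomputable section

variable (k : Type) [Field k] (n : ℕ)

/-- The polynomial ring `S = k[x_1,…,x_n]`. -/
abbrev S := MvPolynomial (Fin n) k

/-- The space `S_1` of linear forms. -/
abbrev S1 := homogeneousSubmodule (Fin n) k 1

/-- The space `S_2` of quadratic forms. -/
abbrev S2 := homogeneousSubmodule (Fin n) k 2

/-- The ambient algebra `S ⊗ Λ(S_2)` containing all terms `K_t = S ⊗ ⋀^t S_2`
of the Koszul complex `K(𝔪², S)`; the product is `(f ⊗ ω)(g ⊗ η) = fg ⊗ ω∧η`. -/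
abbrev KK := (MvPolynomial (Fin n) k) ⊗[k] ExteriorAlgebra k (S2 k n)

variable {k n}

/-- The product of two linear forms, as an element of `S_2`. -/
def mulW (a b : S1 k n) : S2 k n :=
  ⟨(a : S k n) * (b : S k n), by
    rw [mem_homogeneousSubmodule]
    have ha := (mem_homogeneousSubmodule 1 (a : S k n)).1 a.2
    have hb := (mem_homogeneousSubmodule 1 (b : S k n)).1 b.2
    simpa using ha.mul hb⟩

/-- The variable `x_i`, as an element of `S_1`. -/
def xv (i : Fin n) : S1 k n :=
  ⟨X i, by rw [mem_homogeneousSubmodule]; exact isHomogeneous_X _ _⟩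

/-- The quadratic monomial `x_i x_j`, as an element of `S_2`. -/
def q (i j : Fin n) : S2 k n := mulW (xv i) (xv j)

variable (k n)

/-- `K_t = S ⊗ ⋀^t S_2`, as a subspace of the ambient algebra `KK`. -/
def Kt (t : ℕ) : Submodule k (KK k n) :=
  LinearMap.range (TensorProduct.map (LinearMap.id : S k n →ₗ[k] S k n)
    (Submodule.subtype (⋀[k]^t (S2 k n))))

variable {k n}

/-- The family of Koszul differentials, encoded as linear endomorphisms of the
ambient space `KK`: `D t` restricted to `K_t` is the `t`-th Koszul differential
`d_t : K_t → K_{t-1}`, i.e. `d_0 = 0` and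
`d_t(f ⊗ m_1 ∧ ⋯ ∧ m_t) = Σ_j (-1)^{j-1} (f·m_j) ⊗ m_1 ∧ ⋯ ∧ m̂_j ∧ ⋯ ∧ m_t`. -/
def IsKoszulDiff (D : ℕ → KK k n →ₗ[k] KK k n) : Prop :=
  D 0 = 0 ∧
  ∀ (t : ℕ) (f : S k n) (m : Fin (t+1) → S2 k n),
    D (t+1) (f ⊗ₜ[k] (ExteriorAlgebra.ιMulti k (t+1) m : ExteriorAlgebra k (S2 k n)))
      = ∑ j : Fin (t+1), ((-1:ℤ)^(j:ℕ)) •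
          ((f * ((m j : S k n))) ⊗ₜ[k]
            (ExteriorAlgebra.ιMulti k t (fun l => m (j.succAbove l)) : ExteriorAlgebra k (S2 k n)))

/-- The cycle `z_{a,b} = Σ_{σ ∈ 𝔖_{t+1}} sgn(σ) a_{σ(t+1)} ⊗ (b_1 a_{σ(1)} ∧ ⋯ ∧ b_t a_{σ(t)})`. -/
def zel (t : ℕ) (a : Fin (t+1) → S1 k n) (b : Fin t → S1 k n) : KK k n :=
  ∑ σ : Equiv.Perm (Fin (t+1)),
    ((Equiv.Perm.sign σ : ℤ)) •
      (((a (σ (Fin.last t)) : S k n)) ⊗ₜ[k]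
        (ExteriorAlgebra.ιMulti k t (fun j => mulW (b j) (a (σ j.castSucc))) :
          ExteriorAlgebra k (S2 k n)))

/-- The cycle `Z_i` (0-indexed: `Zel i` is the paper's `Z_i` for `0 ≤ i ≤ n-1`), namely
`Z_i = Σ_{j=0}^{i} (-1)^{j} x_j ⊗ (x_0 x_i ∧ ⋯ ∧ x̂_j x_i ∧ ⋯ ∧ x_{i-1} x_i ∧ x_i²)`. -/
def Zel (i : Fin n) : KK k n :=
  ∑ j : Fin ((i:ℕ)+1),
    ((-1:ℤ)^(j:ℕ)) •
      ((X (Fin.castLE i.isLt j) : S k n) ⊗ₜ[k]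
        (ExteriorAlgebra.ιMulti k (i:ℕ)
          (fun l : Fin (i:ℕ) => q (Fin.castLE i.isLt (j.succAbove l)) i) :
            ExteriorAlgebra k (S2 k n)))


variable (k n) in
/-- The subspace of `S` of polynomials all of whose homogeneous components have even
degree, i.e. the second Veronese `S^(2) = ⊕_d S_{2d}`. -/
def Seven : Submodule k (S k n) := ⨆ e : ℕ, homogeneousSubmodule (Fin n) k (2*e)

variable (k n) in
/-- The subspace of `K_t = S ⊗ ⋀^t S_2` of elements all of whose homogeneous components
have even internal degree (an element of `S_e ⊗ ⋀^t S_2` has internal degree `e + 2t`). -/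
def KtEven (t : ℕ) : Submodule k (KK k n) :=
  LinearMap.range (TensorProduct.map (Submodule.subtype (Seven k n))
    (Submodule.subtype (⋀[k]^t (S2 k n))))

/-!
A word `f ⊗ m₁ ∧ ⋯ ∧ m_t`, with `f` a product of `r` variables, is a labelling of the
`N = r + 2t` slots of a graph with `r` legs and `t` edges. Write `d` for the Koszul differential
and `δ = ∑_{i,l} ∂_i ∂_l ⊗ (x_i x_l ∧ ·)`. Then `dδ + δd` sends a word to
`∑_{x,y} (word with slots x and y exchanged) - N · word`, so it is a transposition sum.

Polarization (characteristic zero) reduces the theorem to multilinear words, on which the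
permutations of the letters act. Let `B = Z^r + boundaries`, where `Z` is spanned by the `z_{a,b}`,
and let `v` be a cycle antisymmetric along the level sets of a function `g` on the letters. For
`i < g b`, the element `v - ∑_{g a = i} (a b) v` is antisymmetric along the level sets of the
smaller function obtained from `g` by setting `g b = i` (a Garnir relation), so it lies in `B` by
induction on `∑ g`. Modulo `B` the transposition sum therefore acts on `v` by the scalar
`κ(g) = ∑_x (2 g(x) + 1 - #{y | g y = g x})`.

If `κ(g) ≠ 0` then `v ∈ B`, since `dδv` is a boundary. If `κ(g) = 0`, then, because
`|T|² ≤ ∑_{y ∈ T} (2y + 1)` with equality only for initial segments `T` of `ℕ`, each edge of a word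
with nonzero antisymmetrization joins a letter on the level of a leg to a higher one; such an
antisymmetrization is an average of products of `r` cycles `z_{a,b}`.
-/

namespace VeroneseKoszul

open ExteriorAlgebra (ι ιMulti)

section AlternatingSums

lemma comp_swap_eq {α β : Type*} [DecidableEq α] {g : α → β} {x y : α} (hxy : g x = g y) :
    g ∘ Equiv.swap x y = g := by
  rw [Equiv.comp_swap_eq_update, hxy, Function.update_eq_self, ← hxy, Function.update_eq_self]

variable {α β V : Type*} [Fintype α] [DecidableEq α] [DecidableEq β] [AddCommGroup V]

/-- The signed sum of `φ` over the permutations that preserve the level sets of `g`. -/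
def alternatingSum (g : α → β) (φ : Equiv.Perm α → V) : V :=
  ∑ σ ∈ {σ : Equiv.Perm α | g ∘ σ = g}, (Equiv.Perm.sign σ : ℤ) • φ σ

lemma alternatingSum_mul_right {g : α → β} {τ : Equiv.Perm α} (hτ : g ∘ τ = g)
    (φ : Equiv.Perm α → V) :
    alternatingSum g (fun σ => (Equiv.Perm.sign τ : ℤ) • φ (σ * τ)) = alternatingSum g φ := by
  refine Finset.sum_equiv (Equiv.mulRight τ) (fun σ => ?_) fun σ _ => ?_
  · have comp_iff : g ∘ (σ * τ) = g ↔ g ∘ σ = g := by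
      rw [Equiv.Perm.coe_mul, ← Function.comp_assoc]
      nth_rw 2 [← hτ]
      exact τ.surjective.injective_comp_right.eq_iff
    simpa using comp_iff.symm
  · rw [Equiv.coe_mulRight, Equiv.Perm.sign_mul, Units.val_mul, mul_smul]

lemma alternatingSum_eq_zero [IsAddTorsionFree V] {g : α → β} {τ : Equiv.Perm α}
    (hτ : g ∘ τ = g) {φ : Equiv.Perm α → V}
    (hφ : ∀ σ, (Equiv.Perm.sign τ : ℤ) • φ (σ * τ) = -φ σ) : alternatingSum g φ = 0 := by
  have shifted := alternatingSum_mul_right hτ φ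
  simp only [hφ, alternatingSum, smul_neg, Finset.sum_neg_distrib] at shifted
  exact neg_eq_self.1 shifted

lemma alternatingSum_permCongr {γ : Type*} [Fintype γ] [DecidableEq γ] (e : γ ≃ α) (g : α → β)
    (φ : Equiv.Perm α → V) :
    alternatingSum (g ∘ e) (fun σ => φ (e.permCongr σ)) = alternatingSum g φ := by
  refine Finset.sum_equiv e.permCongr (fun σ => ?_) fun σ _ => ?_
  · have comp_iff : g ∘ e.permCongr σ = g ↔ (g ∘ e) ∘ σ = g ∘ e := by
      rw [← e.surjective.injective_comp_right.eq_iff]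
      simp [Function.comp_def]
    simp [comp_iff]
  · rw [Equiv.Perm.sign_permCongr]

lemma alternatingSum_comp_injective {γ : Type*} [DecidableEq γ] {f : β → γ}
    (hf : Function.Injective f) (g : α → β) (φ : Equiv.Perm α → V) :
    alternatingSum (f ∘ g) φ = alternatingSum g φ := by
  simp only [alternatingSum, Function.comp_assoc, hf.comp_left.eq_iff]

lemma alternatingSum_id (φ : Equiv.Perm α → V) : alternatingSum id φ = φ 1 := by
  have trivial_stabilizer : ({σ : Equiv.Perm α | id ∘ σ = id} : Finset (Equiv.Perm α)) = {1} := by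
    ext σ
    simp [Equiv.ext_iff, funext_iff]
  rw [alternatingSum, trivial_stabilizer, Finset.sum_singleton, Equiv.Perm.sign_one, Units.val_one,
    one_smul]

lemma alternatingSum_const (c : β) (φ : Equiv.Perm α → V) :
    alternatingSum (fun _ => c) φ = ∑ σ, (Equiv.Perm.sign σ : ℤ) • φ σ := by
  simp [alternatingSum, Function.comp_def]

lemma alternatingSum_sumMap {γ δ : Type*} [Fintype γ] [DecidableEq γ] [DecidableEq δ] (g : α → β)
    (h : γ → δ) (φ : Equiv.Perm (α ⊕ γ) → V) :
    alternatingSum (Sum.map g h) φ =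
      alternatingSum g fun σ => alternatingSum h fun τ => φ (Equiv.Perm.sumCongr σ τ) := by
  simp only [alternatingSum, Finset.smul_sum]
  rw [← Finset.sum_product']
  symm
  refine Finset.sum_nbij (fun p => Equiv.Perm.sumCongrHom α γ p) (fun p hp => ?_)
    (Equiv.Perm.sumCongrHom_injective.injOn) (fun σ hσ => ?_) (fun p _ => ?_)
  · simp only [Finset.mem_product, Finset.mem_filter_univ] at hp ⊢
    exact (Sum.map_comp_map g h p.1 p.2).trans (by rw [hp.1, hp.2])
  · have level (x : α ⊕ γ) : Sum.map g h (σ x) = Sum.map g h x :=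
      congrFun (Finset.mem_filter_univ σ |>.1 hσ) x
    obtain ⟨p, rfl⟩ := Equiv.Perm.mem_sumCongrHom_range_of_perm_mapsTo_inl (σ := σ) (by
      rintro _ ⟨x, rfl⟩
      have := level (Sum.inl x)
      rcases hx : σ (Sum.inl x) with y | y
      · exact ⟨y, rfl⟩
      · simp [hx] at this)
    refine ⟨p, ?_, rfl⟩
    simp only [Finset.coe_product, Set.mem_prod, Finset.mem_coe, Finset.mem_filter_univ]
    exact ⟨funext fun x => Sum.inl_injective (level (Sum.inl x)),
      funext fun x => Sum.inr_injective (level (Sum.inr x))⟩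
  · simp [mul_smul]

lemma alternatingSum_alternatingSum {γ : Type*} [DecidableEq γ] (f : β → γ) (g : α → β)
    (φ : Equiv.Perm α → V) :
    alternatingSum (f ∘ g) (fun σ => alternatingSum g fun τ => φ (σ * τ)) =
      Finset.card {τ : Equiv.Perm α | g ∘ τ = g} • alternatingSum (f ∘ g) φ := by
  rw [← Finset.sum_const]
  simp only [alternatingSum, Finset.smul_sum]
  rw [Finset.sum_comm]
  refine Finset.sum_congr rfl fun τ hτ => ?_
  have stabilizes : (f ∘ g) ∘ τ = f ∘ g := by
    rw [Function.comp_assoc, (Finset.mem_filter_univ τ).1 hτ]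
  exact alternatingSum_mul_right stabilizes φ

end AlternatingSums

section Content

variable {α : Type*} [Fintype α]

/-- The content of a filling `g` that puts `x` into the level `g x`: modulo smaller fillings, the
sum of `ρ (swap x y)` over ordered pairs `x ≠ y` acts on `IsAlternating` vectors by this scalar. -/
def content (g : α → ℕ) : ℤ := ∑ x, (2 * (g x : ℤ) + 1 - Finset.card {y | g y = g x})

lemma content_comp_equiv {γ : Type*} [Fintype γ] (e : γ ≃ α) (g : α → ℕ) :
    content (g ∘ e) = content g := by
  refine Fintype.sum_equiv e _ _ fun x => ?_
  congr 2
  exact Finset.card_equiv e fun y => by simp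

lemma sum_sum_eq_content_add_card_smul {M : Type*} [AddCommGroup M] (g : α → ℕ)
    (T : α → α → M) (p : M) (symm : ∀ x y, T x y = T y x)
    (sum_level : ∀ y, ∀ i < g y, ∑ x with g x = i, T x y = p) (diag : ∀ x, T x x = p)
    (same_level : ∀ x y, x ≠ y → g x = g y → T x y = -p) :
    ∑ x, ∑ y, T x y = (content g + Fintype.card α) • p := by
  classical
  have below (y : α) : ∑ x with g x < g y, T x y = (g y : ℤ) • p := by
    rw [← Finset.sum_fiberwise_of_maps_to (t := Finset.range (g y)) (g := g) (by simp),
      Finset.sum_congr rfl (g := fun _ => p) fun i hi => ?_]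
    · simp
    · rw [Finset.mem_range] at hi
      rw [← sum_level y i hi, Finset.filter_filter]
      exact Finset.sum_congr (Finset.filter_congr fun x _ => by omega) fun _ _ => rfl
  have level (y : α) : ∑ x with g x = g y, T x y =
      (2 - (Finset.card {x | g x = g y} : ℤ)) • p := by
    have hy : y ∈ ({x | g x = g y} : Finset α) := by simp
    rw [← Finset.add_sum_erase _ _ hy, diag, Finset.sum_congr rfl (g := fun _ => -p) fun x hx =>
        same_level x y (Finset.ne_of_mem_erase hx) (by simpa using Finset.mem_of_mem_erase hx),
      Finset.sum_const, ← Finset.card_erase_add_one hy, ← natCast_zsmul]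
    push_cast
    module
  have above : ∑ y, ∑ x with g y < g x, T x y = ∑ y, ∑ x with g x < g y, T x y := by
    simp only [Finset.sum_filter]
    rw [Finset.sum_comm]
    simp only [symm]
  have trichotomy (y : α) : ∑ x, T x y =
      ∑ x with g x < g y, T x y + ∑ x with g x = g y, T x y + ∑ x with g y < g x, T x y := by
    simp only [Finset.sum_filter, ← Finset.sum_add_distrib]
    refine Finset.sum_congr rfl fun x _ => ?_
    rcases lt_trichotomy (g x) (g y) with h | h | h
    · simp [h, h.ne, h.not_gt]
    · simp [h]
    · simp [h, h.ne', h.not_gt]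
  rw [Finset.sum_comm, Finset.sum_congr rfl fun y _ => trichotomy y]
  simp only [Finset.sum_add_distrib, above, below, level, ← Finset.sum_smul, ← add_smul]
  simp only [content, ← Finset.sum_add_distrib, ← Finset.card_univ, Finset.card_eq_sum_ones,
    Nat.cast_sum]
  congr 1
  exact Finset.sum_congr rfl fun x _ => by push_cast; ring

end Content

section Garnir

variable {R α V : Type*} [CommRing R] [AddCommGroup V] [Module R V] [DecidableEq α]

/-- The vectors that change sign under transpositions within the level sets of `g`. -/
def IsAlternating (ρ : Representation R (Equiv.Perm α) V) (g : α → ℕ) (v : V) : Prop :=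
  ∀ x y, x ≠ y → g x = g y → ρ (Equiv.swap x y) v = -v

variable [Fintype α]

/-- The Garnir element that moves `b` into the level `i` of `g`. -/
def garnir (ρ : Representation R (Equiv.Perm α) V) (g : α → ℕ) (b : α) (i : ℕ) (v : V) : V :=
  v - ∑ a with g a = i, ρ (Equiv.swap a b) v

variable {ρ : Representation R (Equiv.Perm α) V} {g : α → ℕ} {v : V}

lemma IsAlternating.apply_swap_garnir (hv : IsAlternating ρ g v) {a b : α} (hab : a ≠ b) :
    ρ (Equiv.swap a b) (garnir ρ g b (g a) v) = -garnir ρ g b (g a) v := by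
  have ha : a ∈ ({x | g x = g a} : Finset α) := by simp
  have involution : ρ (Equiv.swap a b) (ρ (Equiv.swap a b) v) = v := by
    rw [← Module.End.mul_apply, ← map_mul, Equiv.swap_mul_self, map_one, Module.End.one_apply]
  have others : ∑ x ∈ ({x | g x = g a} : Finset α).erase a,
      ρ (Equiv.swap a b) (ρ (Equiv.swap x b) v) =
        -∑ x ∈ ({x | g x = g a} : Finset α).erase a, ρ (Equiv.swap x b) v := by
    rw [← Finset.sum_neg_distrib]
    refine Finset.sum_congr rfl fun x hx => ?_
    have hax : a ≠ x := (Finset.ne_of_mem_erase hx).symm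
    have hgx : g a = g x := by simpa [eq_comm] using Finset.mem_of_mem_erase hx
    have conj : Equiv.swap a b * Equiv.swap x b = Equiv.swap x b * Equiv.swap a x := by
      rw [Equiv.mul_swap_eq_swap_mul (Equiv.swap x b), Equiv.swap_apply_left,
        Equiv.swap_apply_of_ne_of_ne hax hab]
    rw [← Module.End.mul_apply, ← map_mul, conj, map_mul, Module.End.mul_apply,
      hv a x hax hgx, map_neg]
  rw [garnir, map_sub, map_sum, ← Finset.add_sum_erase _ _ ha, ← Finset.add_sum_erase _ _ ha,
    involution, others]
  abel

lemma IsAlternating.apply_swap_garnir_of_ne (hv : IsAlternating ρ g v) {x y b : α} (i : ℕ)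
    (hxy : x ≠ y) (hg : g x = g y) (hxb : x ≠ b) (hyb : y ≠ b) :
    ρ (Equiv.swap x y) (garnir ρ g b i v) = -garnir ρ g b i v := by
  have level : ∑ a with g a = i, ρ (Equiv.swap x y) (ρ (Equiv.swap a b) v) =
      -∑ a with g a = i, ρ (Equiv.swap a b) v := by
    rw [← Finset.sum_neg_distrib]
    refine Finset.sum_equiv (Equiv.swap x y) (fun a => ?_) fun a _ => ?_
    · have := congrFun (comp_swap_eq hg) a
      simp only [Function.comp_apply] at this
      simp [this]
    · rw [← Module.End.mul_apply, ← map_mul, Equiv.mul_swap_eq_swap_mul,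
        Equiv.swap_apply_of_ne_of_ne hxb.symm hyb.symm, map_mul, Module.End.mul_apply,
        hv x y hxy hg, map_neg]
  rw [garnir, map_sub, map_sum, hv x y hxy hg, level]
  abel

lemma IsAlternating.update_garnir (hv : IsAlternating ρ g v) (b : α) (i : ℕ) :
    IsAlternating ρ (Function.update g b i) (garnir ρ g b i v) := by
  intro x y hxy hg
  by_cases hxb : x = b
  · subst hxb
    rw [Function.update_self, Function.update_of_ne hxy.symm] at hg
    rw [Equiv.swap_comm, hg, hv.apply_swap_garnir hxy.symm]
  by_cases hyb : y = b
  · subst hyb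
    rw [Function.update_self, Function.update_of_ne hxy] at hg
    rw [← hg, hv.apply_swap_garnir hxy]
  rw [Function.update_of_ne hxb, Function.update_of_ne hyb] at hg
  exact hv.apply_swap_garnir_of_ne i hxy hg hxb hyb

lemma IsAlternating.apply_eq_sign_smul (hv : IsAlternating ρ g v) (σ : Equiv.Perm α)
    (hσ : g ∘ σ = g) : ρ σ v = (Equiv.Perm.sign σ : ℤ) • v := by
  induction hN : σ.support.card using Nat.strong_induction_on generalizing σ with
  | _ N ih =>
    by_cases fixes : ∀ x, σ x = x
    · obtain rfl : σ = 1 := Equiv.ext fixes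
      simp
    obtain ⟨x, hx⟩ := not_forall.1 fixes
    have hgx : g x = g (σ x) := (congrFun hσ x).symm
    have smaller := ih _ (hN ▸ Equiv.Perm.card_support_swap_mul hx) (Equiv.swap x (σ x) * σ)
      (by rw [Equiv.Perm.coe_mul, ← Function.comp_assoc, comp_swap_eq hgx, hσ]) rfl
    have factor : σ = Equiv.swap x (σ x) * (Equiv.swap x (σ x) * σ) := by
      rw [← mul_assoc, Equiv.swap_mul_self, one_mul]
    calc ρ σ v = ρ (Equiv.swap x (σ x)) (ρ (Equiv.swap x (σ x) * σ) v) := by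
          rw [← Module.End.mul_apply, ← map_mul, ← factor]
      _ = (Equiv.Perm.sign σ : ℤ) • v := by
          rw [smaller, map_zsmul, hv _ _ (Ne.symm hx) hgx, Equiv.Perm.sign_mul,
            Equiv.Perm.sign_swap (Ne.symm hx)]
          simp

lemma IsAlternating.alternatingSum_eq_card_smul (hv : IsAlternating ρ g v) :
    alternatingSum g (fun σ => ρ σ v) =
      Finset.card {σ : Equiv.Perm α | g ∘ σ = g} • v := by
  rw [alternatingSum, ← Finset.sum_const]
  refine Finset.sum_congr rfl fun σ hσ => ?_
  rw [hv.apply_eq_sign_smul σ (by simpa using hσ), smul_smul, ← Units.val_mul, Int.units_mul_self,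
    Units.val_one, one_smul]

lemma sum_update_lt_sum {b : α} {i : ℕ} (hi : i < g b) :
    ∑ x, Function.update g b i x < ∑ x, g x := by
  rw [Finset.sum_update_of_mem (Finset.mem_univ b), ← Finset.add_sum_erase _ g (Finset.mem_univ b),
    Finset.sdiff_singleton_eq_erase]
  omega

end Garnir

section ContentInduction

variable {F α V : Type*} [Field F] [AddCommGroup V] [Module F V] [Fintype α] [DecidableEq α]
  {ρ : Representation F (Equiv.Perm α) V} {C B : Submodule F V}

lemma IsAlternating.content_smul_mem {g : α → ℕ} {v : V} (hv : IsAlternating ρ g v)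
    (garnir_mem : ∀ b, ∀ i < g b, garnir ρ g b i v ∈ B)
    (transpositions : ∑ x, ∑ y, ρ (Equiv.swap x y) v - Fintype.card α • v ∈ B) :
    content g • v ∈ B := by
  have count := sum_sum_eq_content_add_card_smul g (fun x y => B.mkQ (ρ (Equiv.swap x y) v))
    (B.mkQ v) (fun x y => by rw [Equiv.swap_comm])
    (fun b i hi => by
      have vanishes := (Submodule.Quotient.mk_eq_zero _).2 (garnir_mem b i hi)
      rw [← Submodule.mkQ_apply, garnir, map_sub, map_sum, sub_eq_zero] at vanishes
      exact vanishes.symm)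
    (fun x => by rw [Equiv.swap_self, ← Equiv.Perm.one_def, map_one, Module.End.one_apply])
    (fun x y hxy hg => by rw [hv x y hxy hg, map_neg])
  rw [← Submodule.Quotient.mk_eq_zero, ← Submodule.mkQ_apply] at transpositions ⊢
  simpa only [map_sub, map_sum, count, map_nsmul, map_zsmul, add_smul, natCast_zsmul,
    add_sub_cancel_right] using transpositions

lemma IsAlternating.mem [CharZero F] {g : α → ℕ} {v : V} (hv : IsAlternating ρ g v) (hvC : v ∈ C)
    (invariant : ∀ σ, ∀ v ∈ C, ρ σ v ∈ C)
    (transpositions : ∀ v ∈ C, ∑ x, ∑ y, ρ (Equiv.swap x y) v - Fintype.card α • v ∈ B)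
    (content_zero : ∀ g : α → ℕ, content g = 0 → ∀ v ∈ C, alternatingSum g (fun σ => ρ σ v) ∈ B) :
    v ∈ B := by
  induction hN : ∑ x, g x using Nat.strong_induction_on generalizing g v with
  | _ N ih =>
    have garnir_mem (b : α) (i : ℕ) (hi : i < g b) : garnir ρ g b i v ∈ B :=
      ih _ (hN ▸ sum_update_lt_sum hi) (hv.update_garnir b i)
        (sub_mem hvC (sum_mem fun a _ => invariant _ _ hvC)) rfl
    by_cases h0 : content g = 0
    · have mem := content_zero g h0 v hvC
      rw [hv.alternatingSum_eq_card_smul, ← Nat.cast_smul_eq_nsmul F] at mem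
      refine (B.smul_mem_iff (Nat.cast_ne_zero.2 (Finset.card_ne_zero_of_mem (a := 1) ?_))).1 mem
      simp
    · have mem := hv.content_smul_mem garnir_mem (transpositions v hvC)
      rw [← Int.cast_smul_eq_zsmul F] at mem
      exact (B.smul_mem_iff (Int.cast_ne_zero.2 h0)).1 mem

theorem le_of_transpositions_of_content_zero [CharZero F]
    (invariant : ∀ σ, ∀ v ∈ C, ρ σ v ∈ C)
    (transpositions : ∀ v ∈ C, ∑ x, ∑ y, ρ (Equiv.swap x y) v - Fintype.card α • v ∈ B)
    (content_zero : ∀ g : α → ℕ, content g = 0 → ∀ v ∈ C, alternatingSum g (fun σ => ρ σ v) ∈ B) :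
    C ≤ B := by
  intro v hv
  have alternating : IsAlternating ρ (fun x => Fintype.equivFin α x) v := fun x y hxy hg =>
    absurd ((Fintype.equivFin α).injective (Fin.val_injective hg)) hxy
  exact alternating.mem hv invariant transpositions content_zero

end ContentInduction

section Counting

lemma card_le_of_forall_lt {T : Finset ℕ} {a : ℕ} (h : ∀ x ∈ T, x < a) : T.card ≤ a := by
  simpa using Finset.card_le_card fun x hx => Finset.mem_range.2 (h x hx)

lemma sq_card_le_sum_odd (T : Finset ℕ) : (T.card : ℤ) ^ 2 ≤ ∑ y ∈ T, (2 * (y : ℤ) + 1) := by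
  induction T using Finset.induction_on_max with
  | empty => simp
  | insert a T h ih =>
    have ha : a ∉ T := fun h' => lt_irrefl _ (h a h')
    have hc : (T.card : ℤ) ≤ a := mod_cast card_le_of_forall_lt h
    rw [Finset.sum_insert ha, Finset.card_insert_of_notMem ha]
    push_cast
    linarith

lemma eq_range_card_of_sum_odd_eq {T : Finset ℕ}
    (hT : ∑ y ∈ T, (2 * (y : ℤ) + 1) = (T.card : ℤ) ^ 2) : T = Finset.range T.card := by
  induction T using Finset.induction_on_max with
  | empty => simp
  | insert a T h ih =>
    have ha : a ∉ T := fun h' => lt_irrefl _ (h a h')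
    have hc : (T.card : ℤ) ≤ a := mod_cast card_le_of_forall_lt h
    have lower := sq_card_le_sum_odd T
    rw [Finset.sum_insert ha, Finset.card_insert_of_notMem ha] at hT
    push_cast at hT
    have card_eq : T.card = a := by
      have : (T.card : ℤ) = a := by linarith
      exact_mod_cast this
    rw [Finset.card_insert_of_notMem ha, Finset.range_add_one, ← ih (by linarith), card_eq]

variable {α : Type*} [Fintype α] {i : Equiv.Perm α} {h : α → ℕ}

/-- The levels of the `i`-partners of the elements in level `m` of `h`. -/
def partnerLevels (i : Equiv.Perm α) (h : α → ℕ) (m : ℕ) : Finset ℕ :=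
  ({x | h x = m} : Finset α).image fun x => h (i x)

lemma injOn_level (inj : Function.Injective fun x => (h x, h (i x))) (m : ℕ) :
    Set.InjOn (fun x => h (i x)) ({x | h x = m} : Finset α) := by
  intro x hx y hy hxy
  rw [Finset.mem_coe, Finset.mem_filter_univ] at hx hy
  exact inj (Prod.ext (hx.trans hy.symm) hxy)

lemma content_eq_sum_partnerLevels (inj : Function.Injective fun x => (h x, h (i x))) :
    content h = ∑ m ∈ Finset.univ.image h,
      (∑ y ∈ partnerLevels i h m, (2 * (y : ℤ) + 1) - ((partnerLevels i h m).card : ℤ) ^ 2) := by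
  have reindex : content h =
      ∑ x, (2 * (h (i x) : ℤ) + 1 - (Finset.card {y | h y = h x} : ℤ)) := by
    rw [content, Finset.sum_sub_distrib, Finset.sum_sub_distrib,
      Equiv.sum_comp i fun x => 2 * (h x : ℤ) + 1]
  rw [reindex, ← Finset.sum_fiberwise_of_maps_to (t := Finset.univ.image h) (g := h) (by simp)]
  refine Finset.sum_congr rfl fun m _ => ?_
  have cards : ∑ x with h x = m, (Finset.card {y | h y = h x} : ℤ) =
      ∑ x with h x = m, (Finset.card {y | h y = m} : ℤ) :=
    Finset.sum_congr rfl fun x hx => by rw [(Finset.mem_filter_univ x).1 hx]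
  rw [Finset.sum_sub_distrib, cards, partnerLevels, Finset.sum_image (injOn_level inj m),
    Finset.card_image_of_injOn (injOn_level inj m), Finset.sum_const, nsmul_eq_mul, sq]

lemma partnerLevels_eq_range (inj : Function.Injective fun x => (h x, h (i x)))
    (content_zero : content h = 0) (x : α) :
    partnerLevels i h (h x) = Finset.range (partnerLevels i h (h x)).card := by
  rw [content_eq_sum_partnerLevels inj, Finset.sum_eq_zero_iff_of_nonneg fun m _ =>
    sub_nonneg.2 (sq_card_le_sum_odd _)] at content_zero
  exact eq_range_card_of_sum_odd_eq (sub_eq_zero.1 (content_zero _ (by simp)))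

lemma exists_fixed_of_content_eq_zero (hi : Function.Involutive i)
    (inj : Function.Injective fun x => (h x, h (i x))) (content_zero : content h = 0) {x : α}
    (hx : h x < h (i x)) : ∃ y, h y = h x ∧ i y = y := by
  have partner_mem : h (i x) ∈ partnerLevels i h (h x) :=
    Finset.mem_image.2 ⟨x, by simp, rfl⟩
  have self_mem : h x ∈ partnerLevels i h (h x) := by
    rw [partnerLevels_eq_range inj content_zero, Finset.mem_range] at partner_mem ⊢
    exact hx.trans partner_mem
  obtain ⟨y, hy, hiy⟩ := Finset.mem_image.1 self_mem
  rw [Finset.mem_filter_univ] at hy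
  have same_pair : (h (i y), h (i (i y))) = (h y, h (i y)) := by rw [hi, hiy, hy]
  exact ⟨y, hy, inj same_pair⟩

end Counting

section Operators

lemma sum_X_mul_X_mul_pderiv_pderiv {σ R : Type*} [Fintype σ] [CommSemiring R] {r : ℕ}
    {f : MvPolynomial σ R} (hf : f.IsHomogeneous r) :
    ∑ i, ∑ l, X i * X l * pderiv i (pderiv l f) = (r * (r - 1)) • f := by
  have euler_pderiv (l : σ) : ∑ i, X i * X l * pderiv i (pderiv l f) =
      (r - 1) • (X l * pderiv l f) := by
    rw [← mul_smul_comm, ← (hf.pderiv (i := l)).sum_X_mul_pderiv, Finset.mul_sum]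
    exact Finset.sum_congr rfl fun i _ => by ring
  rw [Finset.sum_comm, Finset.sum_congr rfl fun l _ => euler_pderiv l, ← Finset.smul_sum,
    hf.sum_X_mul_pderiv, mul_comm, mul_smul]

/-- The linear functional `p ↦ ∂ᵢ∂ₗ p` on quadratic forms, with values in the constants. -/
def hessianCoeff (i l : Fin n) : Module.Dual k (S2 k n) :=
  lcoeff k 0 ∘ₗ (pderiv i).toLinearMap ∘ₗ (pderiv l).toLinearMap ∘ₗ (S2 k n).subtype

lemma C_hessianCoeff (i l : Fin n) (p : S2 k n) :
    C (hessianCoeff i l p) = pderiv i (pderiv l (p : S k n)) := by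
  have constant : (pderiv i (pderiv l (p : S k n))).IsHomogeneous 0 :=
    (IsHomogeneous.pderiv (i := l) p.2).pderiv (i := i)
  exact (totalDegree_eq_zero_iff_eq_C.1 (Nat.le_zero.1 constant.totalDegree_le)).symm

lemma sum_hessianCoeff_smul_q (p : S2 k n) :
    ∑ i, ∑ l, hessianCoeff i l p • (q i l : S2 k n) = (2 : k) • p := by
  apply Subtype.ext
  have euler := sum_X_mul_X_mul_pderiv_pderiv (σ := Fin n) (R := k) p.2
  simp only [← C_hessianCoeff, mul_comm _ (C _), ← smul_eq_C_mul] at euler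
  simpa [q, mulW, xv, two_smul] using euler

variable (k n) in
/-- The Koszul differential on all of `S ⊗ Λ(S₂)`, written symmetrically in the variables as
`½ ∑ᵢₗ xᵢxₗ ⊗ (contraction by ∂ᵢ∂ₗ)`. -/
def differential : KK k n →ₗ[k] KK k n :=
  (2⁻¹ : k) • ∑ i : Fin n, ∑ l : Fin n,
    TensorProduct.map (LinearMap.mulLeft k (X i * X l : S k n))
      (CliffordAlgebra.contractLeft (Q := (0 : QuadraticForm k (S2 k n))) (hessianCoeff i l))

variable (k n) in
/-- The operator `∑ᵢₗ ∂ᵢ∂ₗ ⊗ (xᵢxₗ ∧ ·)`, which is adjoint to the Koszul differential up to a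
scalar for the apolar inner product. -/
def codifferential : KK k n →ₗ[k] KK k n :=
  ∑ i : Fin n, ∑ l : Fin n,
    TensorProduct.map ((pderiv i).toLinearMap ∘ₗ (pderiv l).toLinearMap)
      (LinearMap.mulLeft k (ι k (q i l : S2 k n)))

variable (k n) in
/-- The Laplacian of the Koszul differential. -/
def laplacian : KK k n →ₗ[k] KK k n :=
  differential k n ∘ₗ codifferential k n + codifferential k n ∘ₗ differential k n

lemma laplacian_apply (x : KK k n) : laplacian k n x =
    differential k n (codifferential k n x) + codifferential k n (differential k n x) := rfl

/-- A quadratic form as an element of degree one in the Koszul complex. -/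
def edge (p : S2 k n) : KK k n := 1 ⊗ₜ ι k p

lemma edge_mul_tmul (p : S2 k n) (f : S k n) (ω : ExteriorAlgebra k (S2 k n)) :
    edge p * f ⊗ₜ[k] ω = f ⊗ₜ (ι k p * ω) := by
  rw [edge, Algebra.TensorProduct.tmul_mul_tmul, one_mul]

lemma tmul_ιMulti_succ {t : ℕ} (f : S k n) (m : Fin (t + 1) → S2 k n) :
    f ⊗ₜ[k] ιMulti k (t + 1) m = edge (m 0) * f ⊗ₜ[k] ιMulti k t (fun j => m j.succ) := by
  rw [edge_mul_tmul, ExteriorAlgebra.ιMulti_succ_apply]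
  rfl

lemma differential_tmul (f : S k n) (ω : ExteriorAlgebra k (S2 k n)) :
    differential k n (f ⊗ₜ ω) = (2⁻¹ : k) • ∑ i : Fin n, ∑ l : Fin n,
      (X i * X l * f) ⊗ₜ[k] CliffordAlgebra.contractLeft
        (Q := (0 : QuadraticForm k (S2 k n))) (hessianCoeff i l) ω := by
  simp only [differential, LinearMap.sum_apply, LinearMap.smul_apply, TensorProduct.map_tmul,
    LinearMap.mulLeft_apply]

lemma codifferential_tmul (f : S k n) (ω : ExteriorAlgebra k (S2 k n)) :
    codifferential k n (f ⊗ₜ ω) = ∑ i : Fin n, ∑ l : Fin n,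
      edge (q i l) * (pderiv i (pderiv l f)) ⊗ₜ[k] ω := by
  simp [codifferential, LinearMap.sum_apply, edge_mul_tmul]

lemma differential_tmul_one (f : S k n) : differential k n (f ⊗ₜ 1) = 0 := by
  simp [differential_tmul, CliffordAlgebra.contractLeft_one]

lemma differential_edge_mul [NeZero (2 : k)] (p : S2 k n) (x : KK k n) :
    differential k n (edge p * x) = (p : S k n) • x - edge p * differential k n x := by
  induction x using TensorProduct.induction_on with
  | zero => simp
  | add x y hx hy => simp only [mul_add, map_add, hx, hy, smul_add]; abel
  | tmul f ω =>
    have leibniz (i l : Fin n) : (X i * X l * f) ⊗ₜ[k] CliffordAlgebra.contractLeft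
        (Q := (0 : QuadraticForm k (S2 k n))) (hessianCoeff i l) (ι k p * ω) =
        ((hessianCoeff i l p • (q i l : S2 k n) : S2 k n) * f : S k n) ⊗ₜ[k] ω -
          edge p * (X i * X l * f) ⊗ₜ[k] CliffordAlgebra.contractLeft
            (Q := (0 : QuadraticForm k (S2 k n))) (hessianCoeff i l) ω := by
      rw [ι, CliffordAlgebra.contractLeft_ι_mul, TensorProduct.tmul_sub, edge_mul_tmul,
        Submodule.coe_smul, smul_mul_assoc, TensorProduct.tmul_smul, TensorProduct.smul_tmul']
      rfl
    simp only [edge_mul_tmul p f, differential_tmul, leibniz, Finset.sum_sub_distrib, smul_sub,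
      mul_smul_comm, Finset.mul_sum]
    congr 1
    simp only [← TensorProduct.sum_tmul, ← Finset.sum_mul, ← Submodule.coe_sum,
      sum_hessianCoeff_smul_q]
    rw [Submodule.coe_smul, smul_mul_assoc, TensorProduct.smul_tmul',
      inv_smul_smul₀ two_ne_zero, TensorProduct.smul_tmul', smul_eq_mul]

lemma differential_tmul_ιMulti [NeZero (2 : k)] (t : ℕ) (f : S k n) (m : Fin (t + 1) → S2 k n) :
    differential k n (f ⊗ₜ[k] ιMulti k (t + 1) m) = ∑ j : Fin (t + 1), (-1 : ℤ) ^ (j : ℕ) •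
      (f * (m j : S k n)) ⊗ₜ[k] ιMulti k t (fun l => m (j.succAbove l)) := by
  induction t with
  | zero =>
    rw [tmul_ιMulti_succ, differential_edge_mul, ExteriorAlgebra.ιMulti_zero_apply,
      differential_tmul_one]
    simp [TensorProduct.smul_tmul', mul_comm]
  | succ t ih =>
    rw [tmul_ιMulti_succ, differential_edge_mul, ih, Fin.sum_univ_succ (n := t + 1), sub_eq_add_neg,
      Finset.mul_sum, ← Finset.sum_neg_distrib]
    congr 1
    · simp [TensorProduct.smul_tmul', mul_comm]
    · refine Finset.sum_congr rfl fun j _ => ?_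
      rw [tmul_ιMulti_succ, Fin.val_succ, pow_succ, mul_neg_one, neg_smul, mul_smul_comm]
      simp only [Fin.succ_succAbove_zero, Fin.succ_succAbove_succ]

lemma codifferential_edge_mul (p : S2 k n) (x : KK k n) :
    codifferential k n (edge p * x) = -(edge p * codifferential k n x) := by
  have anticomm (p' : S2 k n) (y : KK k n) :
      edge p' * (edge p * y) = -(edge p * (edge p' * y)) := by
    apply eq_neg_of_add_eq_zero_left
    rw [← mul_assoc, ← mul_assoc, ← add_mul, edge, edge, Algebra.TensorProduct.tmul_mul_tmul,
      Algebra.TensorProduct.tmul_mul_tmul, ← TensorProduct.tmul_add,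
      ExteriorAlgebra.ι_add_mul_swap, TensorProduct.tmul_zero, zero_mul]
  induction x using TensorProduct.induction_on with
  | zero => simp
  | add x y hx hy => simp only [mul_add, map_add, hx, hy]; abel
  | tmul f ω =>
    rw [edge_mul_tmul, codifferential_tmul, codifferential_tmul]
    simp only [← edge_mul_tmul, anticomm, Finset.sum_neg_distrib, Finset.mul_sum]

lemma q_comm (i l : Fin n) : (q i l : S2 k n) = q l i := Subtype.ext (mul_comm _ _)

/-- The transfer part of the Laplacian: every leg of `f` is exchanged with an end of the
edge `p`. -/
def legEdgeExchange (f : S k n) (p : S2 k n) (ω : ExteriorAlgebra k (S2 k n)) : KK k n :=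
  ∑ i, ∑ l, edge (q i l) * (pderiv i f * pderiv l (p : S k n)) ⊗ₜ[k] ω

lemma codifferential_smul_tmul (p : S2 k n) (f : S k n) (ω : ExteriorAlgebra k (S2 k n)) :
    codifferential k n ((p : S k n) • f ⊗ₜ ω) = (p : S k n) • codifferential k n (f ⊗ₜ ω) +
      (2 : k) • (edge p * f ⊗ₜ[k] ω) + (2 : k) • legEdgeExchange f p ω := by
  have second_derivative : (2 : k) • (edge p * f ⊗ₜ[k] ω) =
      ∑ i, ∑ l, edge (q i l) * (pderiv i (pderiv l (p : S k n)) * f) ⊗ₜ[k] ω := by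
    rw [edge_mul_tmul, ← TensorProduct.tmul_smul, ← smul_mul_assoc, ← map_smul,
      ← sum_hessianCoeff_smul_q p]
    simp only [map_sum, map_smul, Finset.sum_mul, TensorProduct.tmul_sum, smul_mul_assoc,
      TensorProduct.tmul_smul, ← C_hessianCoeff, ← smul_eq_C_mul, edge_mul_tmul,
      TensorProduct.smul_tmul']
  have first_derivatives : (2 : k) • legEdgeExchange f p ω =
      ∑ i, ∑ l, edge (q i l) * (pderiv i (p : S k n) * pderiv l f) ⊗ₜ[k] ω +
        ∑ i, ∑ l, edge (q i l) * (pderiv l (p : S k n) * pderiv i f) ⊗ₜ[k] ω := by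
    rw [two_smul]
    congr 1
    · rw [legEdgeExchange, Finset.sum_comm]
      refine Finset.sum_congr rfl fun i _ => Finset.sum_congr rfl fun l _ => ?_
      rw [q_comm, mul_comm (pderiv l f)]
    · refine Finset.sum_congr rfl fun i _ => Finset.sum_congr rfl fun l _ => ?_
      rw [mul_comm (pderiv i f)]
  rw [second_derivative, first_derivatives, TensorProduct.smul_tmul', smul_eq_mul,
    codifferential_tmul, codifferential_tmul]
  simp only [pderiv_mul, map_add, TensorProduct.add_tmul, mul_add, Finset.sum_add_distrib,
    Finset.smul_sum, edge_mul_tmul, TensorProduct.smul_tmul', smul_eq_mul]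
  abel

lemma laplacian_edge_mul_tmul [NeZero (2 : k)] (p : S2 k n) (f : S k n)
    (ω : ExteriorAlgebra k (S2 k n)) :
    laplacian k n (edge p * f ⊗ₜ[k] ω) = edge p * laplacian k n (f ⊗ₜ ω) +
      (2 : k) • (edge p * f ⊗ₜ[k] ω) + (2 : k) • legEdgeExchange f p ω := by
  rw [laplacian_apply, laplacian_apply, codifferential_edge_mul, differential_edge_mul, map_sub,
    map_neg, differential_edge_mul, codifferential_edge_mul, codifferential_smul_tmul, mul_add]
  abel

lemma laplacian_tmul_one [NeZero (2 : k)] {r : ℕ} {f : S k n} (hf : f.IsHomogeneous r) :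
    laplacian k n (f ⊗ₜ 1) = (r * (r - 1)) • f ⊗ₜ[k] (1 : ExteriorAlgebra k (S2 k n)) := by
  rw [laplacian_apply, differential_tmul_one, map_zero, add_zero, codifferential_tmul,
    TensorProduct.smul_tmul', ← sum_X_mul_X_mul_pderiv_pderiv hf]
  simp only [map_sum, differential_edge_mul, differential_tmul_one, mul_zero, sub_zero,
    TensorProduct.smul_tmul', TensorProduct.sum_tmul]
  rfl

lemma laplacian_tmul_ιMulti [NeZero (2 : k)] {r t : ℕ} {f : S k n} (hf : f.IsHomogeneous r)
    (m : Fin t → S2 k n) :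
    laplacian k n (f ⊗ₜ[k] ιMulti k t m) =
      ((r * (r - 1) + 2 * t : ℕ) : k) • f ⊗ₜ[k] ιMulti k t m +
      (2 : k) • ∑ j, ∑ i, ∑ l, (pderiv i f * pderiv l (m j : S k n)) ⊗ₜ[k]
        ιMulti k t (Function.update m j (q i l)) := by
  induction t with
  | zero =>
    rw [ExteriorAlgebra.ιMulti_zero_apply, laplacian_tmul_one hf]
    simp only [Finset.univ_eq_empty, Finset.sum_empty, smul_zero, add_zero, mul_zero,
      Nat.cast_smul_eq_nsmul]
  | succ t ih =>
    have update_succ (j : Fin t) (p : S2 k n) :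
        (fun j' : Fin t => Function.update m j.succ p j'.succ) =
          Function.update (fun j' : Fin t => m j'.succ) j p :=
      Function.update_comp_eq_of_injective m (Fin.succ_injective t) j p
    rw [tmul_ιMulti_succ, laplacian_edge_mul_tmul, ih, Fin.sum_univ_succ]
    simp only [legEdgeExchange, tmul_ιMulti_succ (t := t), update_succ, Function.update_self,
      Function.update_of_ne (Fin.succ_ne_zero _).symm, Function.update_of_ne (Fin.succ_ne_zero _),
      mul_add, mul_smul_comm, smul_add, Finset.mul_sum]
    rw [mul_one, ← Nat.add_assoc, Nat.cast_add _ 2, Nat.cast_ofNat, add_smul]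
    abel

end Operators

section Words

/-- The positions of a word `(∏ₛ vₛ) ⊗ (m₁ ∧ ⋯ ∧ mₜ)`: `r` legs for the linear factors of the
coefficient, and a left and a right end for each of the `t` edges `m_j = (left) · (right)`. -/
abbrev Slot (r t : ℕ) := Fin r ⊕ (Fin t ⊕ Fin t)

variable {r t : ℕ}

/-- The slot of a linear factor of the coefficient. -/
abbrev leg (s : Fin r) : Slot r t := Sum.inl s

/-- The slot of the first factor of a quadratic form. -/
abbrev left (j : Fin t) : Slot r t := Sum.inr (Sum.inl j)

/-- The slot of the second factor of a quadratic form. -/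
abbrev right (j : Fin t) : Slot r t := Sum.inr (Sum.inr j)

lemma mulW_comm (a b : S1 k n) : mulW a b = mulW b a := Subtype.ext (mul_comm _ _)

/-- The element of `S_r ⊗ ⋀ᵗ S₂` obtained by writing linear forms into the slots. -/
def word (v : Slot r t → S1 k n) : KK k n :=
  (∏ s, (v (leg s) : S k n)) ⊗ₜ[k] ιMulti k t (fun j => mulW (v (left j)) (v (right j)))

variable (k) in
/-- The word with variables in its slots. -/
def varWord (w : Slot r t → Fin n) : KK k n := word fun x => xv (w x)

lemma word_comp_sumCongr (v : Slot r t → S1 k n) (σ : Equiv.Perm (Fin r))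
    (τ : Equiv.Perm (Fin t)) :
    word (v ∘ Equiv.Perm.sumCongr σ (Equiv.Perm.sumCongr τ τ)) =
      (Equiv.Perm.sign τ : ℤ) • word v := by
  have legs : ∏ s, (v (leg (σ s)) : S k n) = ∏ s, (v (leg s) : S k n) :=
    Equiv.prod_comp σ fun s => (v (leg s) : S k n)
  have edges := (ιMulti k t (M := S2 k n)).map_perm (fun j => mulW (v (left j)) (v (right j))) τ
  rw [Units.smul_def] at edges
  rw [word, word, ← TensorProduct.tmul_smul, ← edges, ← legs]
  rfl

lemma word_comp_swap_leg (v : Slot r t → S1 k n) (s s' : Fin r) :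
    word (v ∘ Equiv.swap (leg s) (leg s')) = word v := by
  have h := word_comp_sumCongr v (Equiv.swap s s') 1
  rwa [Equiv.Perm.sumCongr_one, Equiv.Perm.sumCongr_swap_one, map_one, Units.val_one,
    one_smul] at h

lemma word_comp_swap_mul_swap (v : Slot r t → S1 k n) {j j' : Fin t} (hj : j ≠ j') :
    word (v ∘ (Equiv.swap (left j) (left j') * Equiv.swap (right j) (right j') :
      Equiv.Perm (Slot r t))) = -word v := by
  have parallel_swap : (Equiv.swap j j').sumCongr (Equiv.swap j j') =
      Equiv.swap (Sum.inl j) (Sum.inl j') * Equiv.swap (Sum.inr j) (Sum.inr j') := by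
    rw [← Equiv.Perm.sumCongr_swap_one, ← Equiv.Perm.sumCongr_one_swap, Equiv.Perm.sumCongr_mul,
      one_mul, mul_one]
  have h := word_comp_sumCongr v 1 (Equiv.swap j j')
  rwa [parallel_swap, ← one_mul (1 : Equiv.Perm (Fin r)), ← Equiv.Perm.sumCongr_mul,
    Equiv.Perm.sumCongr_one_swap, Equiv.Perm.sumCongr_one_swap, Equiv.Perm.sign_swap hj,
    Units.val_neg, Units.val_one, neg_one_smul] at h

/-- The permutation exchanging the two ends of every edge in `A`. -/
def flipEdges (A : Finset (Fin t)) : Equiv.Perm (Slot r t) :=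
  Equiv.Perm.sumCongr 1 <| Function.Involutive.toPerm
    (Sum.elim (fun j => if j ∈ A then Sum.inr j else Sum.inl j)
      (fun j => if j ∈ A then Sum.inl j else Sum.inr j))
    (by rintro (j | j) <;> by_cases hj : j ∈ A <;> simp [hj])

@[simp]
lemma flipEdges_leg (A : Finset (Fin t)) (s : Fin r) : flipEdges A (leg s) = leg s := rfl

@[simp]
lemma flipEdges_left (A : Finset (Fin t)) (j : Fin t) :
    flipEdges (r := r) A (left j) = if j ∈ A then right j else left j :=
  apply_ite Sum.inr _ _ _

@[simp]
lemma flipEdges_right (A : Finset (Fin t)) (j : Fin t) :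
    flipEdges (r := r) A (right j) = if j ∈ A then left j else right j :=
  apply_ite Sum.inr _ _ _

lemma flipEdges_inv (A : Finset (Fin t)) : (flipEdges (r := r) A)⁻¹ = flipEdges A := by
  rw [flipEdges, Equiv.Perm.sumCongr_inv, inv_one]
  rfl

lemma word_comp_flipEdges (v : Slot r t → S1 k n) (A : Finset (Fin t)) :
    word (v ∘ flipEdges A) = word v := by
  rw [word, word]
  congr 2
  funext j
  by_cases hj : j ∈ A <;> simp [hj, mulW_comm]

lemma flipEdges_singleton (j : Fin t) :
    flipEdges (r := r) {j} = Equiv.swap (left j) (right j) := by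
  ext (s | i | i)
  · simp [Equiv.swap_apply_def]
  all_goals by_cases hi : i = j <;> simp [Equiv.swap_apply_def, hi]

lemma word_comp_swap_left_left (v : Slot r t → S1 k n) {j j' : Fin t} (hj : j ≠ j') :
    word (v ∘ Equiv.swap (left j) (left j')) = -word (v ∘ Equiv.swap (right j) (right j')) := by
  rw [← word_comp_swap_mul_swap (v ∘ Equiv.swap (right j) (right j')) hj, Function.comp_assoc,
    ← Equiv.Perm.coe_mul, Equiv.swap_comm]
  congr 2
  ext (s | i | i) <;> simp [Equiv.swap_apply_def] <;> grind

lemma word_comp_swap_flipEdges (v : Slot r t → S1 k n) (A : Finset (Fin t)) (x y : Slot r t) :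
    word (v ∘ Equiv.swap (flipEdges A x) (flipEdges A y)) =
      word ((v ∘ flipEdges A) ∘ Equiv.swap x y) := by
  rw [Equiv.swap_apply_apply, flipEdges_inv, Equiv.Perm.coe_mul, ← Function.comp_assoc,
    word_comp_flipEdges]
  rfl

lemma word_comp_swap_left_right (v : Slot r t → S1 k n) {j j' : Fin t} (hj : j ≠ j') :
    word (v ∘ Equiv.swap (left j) (right j')) = -word (v ∘ Equiv.swap (right j) (left j')) := by
  have flipped := word_comp_swap_left_left (v ∘ flipEdges {j'}) hj
  simpa [← word_comp_swap_flipEdges, hj] using flipped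

end Words

section LaplacianOfWords

variable {r t : ℕ}

lemma derivation_prod {R A M ι : Type*} [CommSemiring R] [CommSemiring A] [AddCommMonoid M]
    [Algebra R A] [Module A M] [Module R M] [DecidableEq ι] (D : Derivation R A M)
    (T : Finset ι) (f : ι → A) :
    D (∏ i ∈ T, f i) = ∑ i ∈ T, (∏ j ∈ T.erase i, f j) • D (f i) := by
  induction T using Finset.induction_on with
  | empty => simp
  | insert a T ha ih =>
    rw [Finset.prod_insert ha, D.leibniz, ih, Finset.sum_insert ha, Finset.erase_insert ha,
      add_comm, Finset.smul_sum]
    congr 1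
    refine Finset.sum_congr rfl fun i hi => ?_
    have hia : a ≠ i := fun h => ha (h ▸ hi)
    rw [Finset.erase_insert_of_ne hia, Finset.prod_insert (by simp [ha]), mul_smul]

lemma varWord_comp_swap_leg_end (w : Slot r t → Fin n) (s : Fin r) (j : Fin t) {e e' : Slot r t}
    (he : e = left j ∧ e' = right j ∨ e = right j ∧ e' = left j) :
    varWord k (w ∘ Equiv.swap (leg s) e) =
      ((∏ s' ∈ Finset.univ.erase s, (X (w (leg s')) : S k n)) * X (w e)) ⊗ₜ[k]
        ιMulti k t (Function.update (fun j => q (w (left j)) (w (right j))) j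
          (q (w (leg s)) (w e'))) := by
  have leg_ne_end (s' : Fin r) : leg s' ≠ e := by rcases he with ⟨rfl, _⟩ | ⟨rfl, _⟩ <;> simp
  rw [varWord, word]
  congr 1
  · rw [← Finset.prod_erase_mul _ _ (Finset.mem_univ s)]
    simp only [Function.comp, Equiv.swap_apply_left, xv]
    congr 1
    refine Finset.prod_congr rfl fun s' hs' => ?_
    rw [Equiv.swap_apply_of_ne_of_ne (by simpa using hs') (leg_ne_end s')]
  · congr 1
    funext i
    rcases he with ⟨rfl, rfl⟩ | ⟨rfl, rfl⟩ <;> by_cases hi : i = j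
    all_goals simp [Equiv.swap_apply_def, q, hi, mulW_comm]

lemma sum_pderiv_mul_pderiv_tmul (w : Slot r t → Fin n) (j : Fin t) :
    ∑ i, ∑ l, (pderiv i (∏ s, (X (w (leg s)) : S k n)) *
        pderiv l ((q (w (left j)) (w (right j)) : S2 k n) : S k n)) ⊗ₜ[k]
      ιMulti k t (Function.update (fun j => q (w (left j)) (w (right j))) j (q i l)) =
    ∑ s, (varWord k (w ∘ Equiv.swap (leg s) (left j)) +
      varWord k (w ∘ Equiv.swap (leg s) (right j))) := by
  have pderiv_q (l a b : Fin n) : pderiv l ((q a b : S2 k n) : S k n) =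
      (if b = l then X a else 0) + (if a = l then X b else 0) := by
    simp only [q, mulW, xv, Derivation.leibniz, pderiv_X, Pi.single_apply, smul_eq_mul, mul_ite,
      mul_one, mul_zero]
  simp only [derivation_prod, pderiv_X, Pi.single_apply, smul_eq_mul, Finset.sum_mul,
    TensorProduct.sum_tmul]
  rw [Finset.sum_congr rfl fun i _ => Finset.sum_comm, Finset.sum_comm]
  refine Finset.sum_congr rfl fun s _ => ?_
  rw [varWord_comp_swap_leg_end w s j (Or.inl ⟨rfl, rfl⟩),
    varWord_comp_swap_leg_end w s j (Or.inr ⟨rfl, rfl⟩)]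
  simp [pderiv_q, mul_add, TensorProduct.add_tmul, Finset.sum_add_distrib,
    TensorProduct.ite_tmul]

lemma sum_varWord_comp_swap_ends (w : Slot r t → Fin n) (j j' : Fin t) :
    varWord k (w ∘ Equiv.swap (left j) (left j')) +
      varWord k (w ∘ Equiv.swap (left j) (right j')) +
      (varWord k (w ∘ Equiv.swap (right j) (left j')) +
      varWord k (w ∘ Equiv.swap (right j) (right j'))) =
    if j = j' then 4 • varWord k w else 0 := by
  let v : Slot r t → S1 k n := fun x => xv (w x)
  change word (v ∘ Equiv.swap (left j) (left j')) + word (v ∘ Equiv.swap (left j) (right j')) +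
    (word (v ∘ Equiv.swap (right j) (left j')) + word (v ∘ Equiv.swap (right j) (right j'))) =
      if j = j' then 4 • word v else 0
  split_ifs with h
  · subst h
    rw [Equiv.swap_comm (right j), ← flipEdges_singleton, word_comp_flipEdges, Equiv.swap_self,
      Equiv.swap_self, Equiv.coe_refl, Function.comp_id]
    abel
  · rw [word_comp_swap_left_left v h, word_comp_swap_left_right v h]
    abel

lemma sum_varWord_comp_swap (w : Slot r t → Fin n) :
    ∑ x : Slot r t, ∑ y : Slot r t, varWord k (w ∘ Equiv.swap x y) =
      (r * r + 4 * t) • varWord k w +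
        2 • ∑ j, ∑ s, (varWord k (w ∘ Equiv.swap (leg s) (left j)) +
          varWord k (w ∘ Equiv.swap (leg s) (right j))) := by
  have leg_leg (s s' : Fin r) : varWord k (w ∘ Equiv.swap (leg (t := t) s) (leg s')) =
      varWord k w :=
    word_comp_swap_leg (fun x => xv (w x)) s s'
  have end_end := Finset.sum_congr rfl fun j (_ : j ∈ Finset.univ) =>
    Finset.sum_congr rfl fun j' (_ : j' ∈ Finset.univ) =>
      sum_varWord_comp_swap_ends (k := k) w j j'
  simp only [Finset.sum_ite_eq, Finset.mem_univ, if_true, Finset.sum_const, Finset.card_univ,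
    Fintype.card_fin, Finset.sum_add_distrib] at end_end
  simp only [Fintype.sum_sum_type, leg_leg, Equiv.swap_comm (left _) (leg _),
    Equiv.swap_comm (right _) (leg _), Finset.sum_add_distrib, Finset.sum_const, Finset.card_univ,
    Fintype.card_fin, Finset.sum_comm (s := (Finset.univ : Finset (Fin r)))
      (t := (Finset.univ : Finset (Fin t)))]
  rw [add_smul, mul_smul, mul_comm 4 t, mul_smul t 4, ← end_end]
  module

lemma laplacian_varWord [NeZero (2 : k)] (w : Slot r t → Fin n) :
    laplacian k n (varWord k w) = ∑ x : Slot r t, ∑ y : Slot r t, varWord k (w ∘ Equiv.swap x y) -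
      Fintype.card (Slot r t) • varWord k w := by
  have coefficient_homogeneous : (∏ s : Fin r, (X (w (leg s)) : S k n)).IsHomogeneous r := by
    simpa using IsHomogeneous.prod Finset.univ (fun s : Fin r => (X (w (leg s)) : S k n))
      (fun _ => 1) fun s _ => isHomogeneous_X _ _
  have hL := laplacian_tmul_ιMulti coefficient_homogeneous
    (fun j => q (w (left j)) (w (right j)))
  rw [Finset.sum_congr rfl fun j _ => sum_pderiv_mul_pderiv_tmul w j] at hL
  have card : Fintype.card (Slot r t) + (r * (r - 1) + 2 * t) = r * r + 4 * t := by
    rw [Fintype.card_sum, Fintype.card_sum, Fintype.card_fin, Fintype.card_fin]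
    cases r with
    | zero => omega
    | succ r => rw [Nat.add_sub_cancel]; ring
  rw [sum_varWord_comp_swap, ← card, add_smul]
  refine hL.trans ?_
  rw [Nat.cast_smul_eq_nsmul, ofNat_smul_eq_nsmul]
  exact eq_sub_of_add_eq' (add_assoc _ _ _).symm

end LaplacianOfWords

section KoszulTerms

lemma Kt_eq_span (t : ℕ) : Kt k n t = Submodule.span k
    (Set.range fun x : S k n × (Fin t → S2 k n) => x.1 ⊗ₜ[k] ιMulti k t x.2) := by
  rw [Kt, TensorProduct.range_map, LinearMap.range_id, Submodule.range_subtype,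
    ← ExteriorAlgebra.ιMulti_span_fixedDegree, ← Submodule.span_univ, Submodule.map₂_span_span]
  congr 1
  ext x
  simp [eq_comm]

lemma tmul_ιMulti_mem_Kt {t : ℕ} (f : S k n) (m : Fin t → S2 k n) :
    f ⊗ₜ[k] ιMulti k t m ∈ Kt k n t := by
  rw [Kt_eq_span]
  exact Submodule.subset_span ⟨(f, m), rfl⟩

lemma differential_mem_Kt [NeZero (2 : k)] {t : ℕ} {x : KK k n} (hx : x ∈ Kt k n (t + 1)) :
    differential k n x ∈ Kt k n t := by
  suffices h : Kt k n (t + 1) ≤ (Kt k n t).comap (differential k n) from h hx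
  rw [Kt_eq_span (t + 1), Submodule.span_le]
  rintro _ ⟨⟨f, m⟩, rfl⟩
  rw [SetLike.mem_coe, Submodule.mem_comap, differential_tmul_ιMulti]
  exact Submodule.sum_mem _ fun j _ => zsmul_mem (tmul_ιMulti_mem_Kt _ _) _

lemma codifferential_mem_Kt {t : ℕ} {x : KK k n} (hx : x ∈ Kt k n t) :
    codifferential k n x ∈ Kt k n (t + 1) := by
  suffices h : Kt k n t ≤ (Kt k n (t + 1)).comap (codifferential k n) from h hx
  rw [Kt_eq_span t, Submodule.span_le]
  rintro _ ⟨⟨f, m⟩, rfl⟩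
  rw [SetLike.mem_coe, Submodule.mem_comap, codifferential_tmul]
  refine Submodule.sum_mem _ fun i _ => Submodule.sum_mem _ fun l _ => ?_
  have wedge := tmul_ιMulti_mem_Kt (pderiv i (pderiv l f))
    (Fin.cons (q i l) m : Fin (t + 1) → S2 k n)
  rw [tmul_ιMulti_succ] at wedge
  simpa only [Fin.cons_zero, Fin.cons_succ] using wedge

lemma eqOn_differential [NeZero (2 : k)] {D : ℕ → KK k n →ₗ[k] KK k n} (hD : IsKoszulDiff D)
    (t : ℕ) : Set.EqOn (D t) (differential k n) (Kt k n t) := by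
  rw [Kt_eq_span]
  apply LinearMap.eqOn_span
  rintro _ ⟨⟨f, m⟩, rfl⟩
  cases t with
  | zero => simp [hD.1, differential_tmul_one]
  | succ t => rw [hD.2, differential_tmul_ιMulti]

lemma koszul_induction {P : KK k n → Prop} (tmul_one : ∀ f : S k n, P (f ⊗ₜ 1))
    (add : ∀ x y, P x → P y → P (x + y)) (edge_mul : ∀ p x, P x → P (edge p * x)) (x : KK k n) :
    P x := by
  induction x using TensorProduct.induction_on with
  | zero => simpa using tmul_one 0
  | add x y hx hy => exact add x y hx hy
  | tmul f ω =>
    refine CliffordAlgebra.left_induction (P := fun ω => P (f ⊗ₜ[k] ω)) 0 (fun c => ?_)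
      (fun ω η hω hη => ?_) (fun ω p hω => ?_) ω
    · rw [Algebra.algebraMap_eq_smul_one, TensorProduct.tmul_smul, TensorProduct.smul_tmul']
      exact tmul_one (c • f)
    · rw [TensorProduct.tmul_add]
      exact add _ _ hω hη
    · simpa only [edge_mul_tmul] using edge_mul p _ hω

end KoszulTerms

section Substitution

variable {N : ℕ}

/-- The map on forms of degree `e` given by substituting linear forms for the variables. -/
def substForm (s : Fin n → S1 k N) (e : ℕ) :
    homogeneousSubmodule (Fin n) k e →ₗ[k] homogeneousSubmodule (Fin N) k e :=
  (aeval fun i => (s i : S k N)).toLinearMap.restrict fun p (hp : p.IsHomogeneous e) => by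
    simpa using hp.aeval (fun i => (s i : S k N)) fun i => (s i).2

/-- The algebra map on Koszul complexes given by substituting linear forms for the variables. -/
def subst (s : Fin n → S1 k N) : KK k n →ₐ[k] KK k N :=
  Algebra.TensorProduct.map (aeval fun i => (s i : S k N)) (ExteriorAlgebra.map (substForm s 2))

variable (s : Fin n → S1 k N)

lemma substForm_xv (i : Fin n) : substForm s 1 (xv i) = s i := Subtype.ext (aeval_X _ i)

lemma substForm_mulW (a b : S1 k n) :
    substForm s 2 (mulW a b) = mulW (substForm s 1 a) (substForm s 1 b) :=
  Subtype.ext (map_mul (aeval fun i => (s i : S k N)) _ _)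

lemma subst_tmul_ιMulti (f : S k n) {t : ℕ} (m : Fin t → S2 k n) :
    subst s (f ⊗ₜ ιMulti k t m) =
      (aeval (fun i => (s i : S k N)) f) ⊗ₜ ιMulti k t fun j => substForm s 2 (m j) := by
  rw [subst, Algebra.TensorProduct.map_tmul, ExteriorAlgebra.map_apply_ιMulti]
  rfl

lemma subst_tmul_one (f : S k n) :
    subst s (f ⊗ₜ 1) = (aeval (fun i => (s i : S k N)) f) ⊗ₜ 1 := by
  rw [subst, Algebra.TensorProduct.map_tmul, map_one]

lemma subst_edge (p : S2 k n) : subst s (edge p) = edge (substForm s 2 p) := by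
  rw [edge, subst, Algebra.TensorProduct.map_tmul, map_one, ExteriorAlgebra.map_apply_ι, edge]

lemma subst_smul (f : S k n) (x : KK k n) :
    subst s (f • x) = aeval (fun i => (s i : S k N)) f • subst s x := by
  induction x using TensorProduct.induction_on with
  | zero => simp
  | add x y hx hy => rw [smul_add, map_add, hx, hy, map_add, smul_add]
  | tmul g ω =>
    simp only [subst, TensorProduct.smul_tmul', Algebra.TensorProduct.map_tmul, smul_eq_mul,
      map_mul]

lemma subst_word {r t : ℕ} (v : Slot r t → S1 k n) :
    subst s (word v) = word fun x => substForm s 1 (v x) := by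
  rw [word, subst_tmul_ιMulti, map_prod]
  simp only [substForm_mulW]
  rfl

lemma subst_varWord {r t : ℕ} (w : Slot r t → Fin n) :
    subst s (varWord k w) = word fun x => s (w x) := by
  simp only [varWord, subst_word, substForm_xv]

lemma subst_zel {t : ℕ} (a : Fin (t + 1) → S1 k n) (b : Fin t → S1 k n) :
    subst s (zel t a b) = zel t (fun i => substForm s 1 (a i)) (fun i => substForm s 1 (b i)) := by
  simp only [zel, map_sum, map_zsmul, subst_tmul_ιMulti, substForm_mulW]
  rfl

lemma subst_differential [NeZero (2 : k)] (x : KK k n) :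
    subst s (differential k n x) = differential k N (subst s x) := by
  induction x using koszul_induction with
  | tmul_one f => rw [differential_tmul_one, map_zero, subst_tmul_one, differential_tmul_one]
  | add x y hx hy => simp only [map_add, hx, hy]
  | edge_mul p x hx =>
    rw [differential_edge_mul, map_sub, subst_smul, map_mul, map_mul, subst_edge,
      differential_edge_mul, hx]
    rfl

lemma subst_mem_Kt {t : ℕ} {x : KK k n} (hx : x ∈ Kt k n t) : subst s x ∈ Kt k N t := by
  suffices h : Kt k n t ≤ (Kt k N t).comap (subst s).toLinearMap from h hx
  rw [Kt_eq_span, Submodule.span_le]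
  rintro _ ⟨⟨f, m⟩, rfl⟩
  rw [SetLike.mem_coe, Submodule.mem_comap, AlgHom.toLinearMap_apply, subst_tmul_ιMulti]
  exact tmul_ιMulti_mem_Kt _ _

variable (k) in
/-- The algebra map on Koszul complexes given by renaming the variables. -/
def renameVars (f : Fin n → Fin N) : KK k n →ₐ[k] KK k N := subst fun i => xv (f i)

lemma renameVars_varWord {r t : ℕ} (f : Fin n → Fin N) (w : Slot r t → Fin n) :
    renameVars k f (varWord k w) = varWord k (f ∘ w) :=
  subst_varWord _ w

lemma renameVars_renameVars {M : ℕ} (f : Fin n → Fin N) (g : Fin N → Fin M) (x : KK k n) :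
    renameVars k g (renameVars k f x) = renameVars k (g ∘ f) x := by
  have aeval_aeval (p : S k n) : aeval (fun i => ((xv (g i) : S1 k M) : S k M))
      (aeval (fun i => ((xv (f i) : S1 k N) : S k N)) p) =
        aeval (fun i => ((xv (g (f i)) : S1 k M) : S k M)) p := by
    rw [← AlgHom.comp_apply]
    congr 1
    exact algHom_ext fun i => by simp [xv]
  unfold renameVars
  induction x using koszul_induction with
  | tmul_one p => simp only [subst_tmul_one, aeval_aeval, Function.comp]
  | add x y hx hy => simp only [map_add, hx, hy]
  | edge_mul p x hx =>
    simp only [map_mul, hx, subst_edge]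
    congr 2
    exact Subtype.ext (aeval_aeval (p : S k n))

lemma renameVars_id (x : KK k n) : renameVars k id x = x := by
  have id_apply (p : S k n) : aeval (fun i => ((xv i : S1 k n) : S k n)) p = p :=
    aeval_X_left_apply p
  unfold renameVars
  induction x using koszul_induction with
  | tmul_one p => simp only [subst_tmul_one, id, id_apply]
  | add x y hx hy => simp only [map_add, hx, hy]
  | edge_mul p x hx =>
    rw [map_mul, hx, subst_edge]
    congr 2
    exact Subtype.ext (id_apply (p : S k n))

variable (k n) in
/-- The action of the symmetric group on the Koszul complex by permuting the variables. -/
def permRep : Representation k (Equiv.Perm (Fin n)) (KK k n) where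
  toFun σ := (renameVars k σ).toLinearMap
  map_one' := LinearMap.ext renameVars_id
  map_mul' σ τ := LinearMap.ext fun x => (renameVars_renameVars τ σ x).symm

lemma permRep_varWord {r t : ℕ} (σ : Equiv.Perm (Fin n)) (w : Slot r t → Fin n) :
    permRep k n σ (varWord k w) = varWord k (σ ∘ w) :=
  renameVars_varWord σ w

end Substitution

section Cycles

variable (k n) in
/-- The span of the cycles `z_{a,b}` on variables, of all lengths. -/
def cycleSpan : Submodule k (KK k n) := Submodule.span k
  {v | ∃ (r : ℕ) (a : Fin (r + 1) → Fin n) (b : Fin r → Fin n),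
    v = zel r (fun l => (xv (a l) : S1 k n)) (fun l => xv (b l))}

variable (k n) in
/-- The space `Z^r + d(K_{t+1})`, where `Z` is the span of the cycles `z_{a,b}`. -/
def cyclePowAddBoundaries (r t : ℕ) : Submodule k (KK k n) :=
  cycleSpan k n ^ r ⊔ (Kt k n (t + 1)).map (differential k n)

lemma map_renameVars_cycleSpan_le {N : ℕ} (f : Fin n → Fin N) :
    (cycleSpan k n).map (renameVars k f).toLinearMap ≤ cycleSpan k N := by
  rw [cycleSpan, Submodule.map_span, Submodule.span_le]
  rintro _ ⟨_, ⟨r, a, b, rfl⟩, rfl⟩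
  refine Submodule.subset_span ⟨r, f ∘ a, f ∘ b, ?_⟩
  simp only [AlgHom.toLinearMap_apply, renameVars, subst_zel, substForm_xv]
  rfl

lemma renameVars_mem_cyclePowAddBoundaries [NeZero (2 : k)] {N r t : ℕ} (f : Fin n → Fin N)
    {x : KK k n} (hx : x ∈ cyclePowAddBoundaries k n r t) :
    renameVars k f x ∈ cyclePowAddBoundaries k N r t := by
  obtain ⟨y, hy, _, ⟨z, hz, rfl⟩, rfl⟩ := Submodule.mem_sup.1 hx
  have map_pow_le : (cycleSpan k n ^ r).map (renameVars k f).toLinearMap ≤ cycleSpan k N ^ r := by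
    rw [Submodule.map_pow]
    gcongr
    exact map_renameVars_cycleSpan_le f
  rw [map_add]
  exact Submodule.add_mem_sup (map_pow_le ⟨y, hy, rfl⟩)
    ⟨renameVars k f z, subst_mem_Kt _ hz, (subst_differential _ _).symm⟩

end Cycles

section Polarization

variable {r t : ℕ}

lemma word_update_leg (v : Slot r t → S1 k n) (s : Fin r) (c : S1 k n) :
    word (Function.update v (leg s) c) =
      ((c : S k n) * ∏ s' ∈ Finset.univ.erase s, (v (leg s') : S k n)) ⊗ₜ[k]
        ιMulti k t (fun j => mulW (v (left j)) (v (right j))) := by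
  rw [word, ← Finset.mul_prod_erase _ _ (Finset.mem_univ s), Function.update_self]
  congr 2
  exact Finset.prod_congr rfl fun s' hs' => by rw [Function.update_of_ne (by simpa using hs')]

lemma word_update_left (v : Slot r t → S1 k n) (j : Fin t) (c : S1 k n) :
    word (Function.update v (left j) c) = (∏ s, (v (leg s) : S k n)) ⊗ₜ[k]
      ιMulti k t (Function.update (fun i => mulW (v (left i)) (v (right i))) j
        (mulW c (v (right j)))) := by
  rw [word]
  congr 2
  funext i
  by_cases hi : i = j
  · subst hi; simp
  · simp [hi]

lemma word_update_right (v : Slot r t → S1 k n) (j : Fin t) (c : S1 k n) :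
    word (Function.update v (right j) c) =
      word (Function.update (v ∘ flipEdges {j}) (left j) c) := by
  rw [← word_comp_flipEdges _ {j}, Function.update_comp_equiv, ← Equiv.Perm.inv_def, flipEdges_inv]
  simp

lemma exists_linearMap_word_update (v : Slot r t → S1 k n) (x : Slot r t) :
    ∃ L : S1 k n →ₗ[k] KK k n, ∀ c, word (Function.update v x c) = L c := by
  have left_linear (v : Slot r t → S1 k n) (j : Fin t) :
      ∃ L : S1 k n →ₗ[k] KK k n, ∀ c, word (Function.update v (left j) c) = L c := by
    let mulRight : S1 k n →ₗ[k] S2 k n :=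
      { toFun c := mulW c (v (right j))
        map_add' a b := Subtype.ext (add_mul _ _ _)
        map_smul' a b := Subtype.ext (smul_mul_assoc _ _ _) }
    exact ⟨TensorProduct.mk k _ _ (∏ s, (v (leg s) : S k n)) ∘ₗ
      (ιMulti k t).toMultilinearMap.toLinearMap (fun i => mulW (v (left i)) (v (right i))) j ∘ₗ
        mulRight, word_update_left v j⟩
  rcases x with s | j | j
  · exact ⟨(TensorProduct.mk k _ _).flip _ ∘ₗ LinearMap.mulRight k _ ∘ₗ (S1 k n).subtype,
      word_update_leg v s⟩
  · exact left_linear v j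
  · simp only [word_update_right]
    exact left_linear _ j

variable (k n r t) in
/-- A word as a multilinear function of its entries. -/
def wordMap : MultilinearMap k (fun _ : Slot r t => S1 k n) (KK k n) where
  toFun := word
  map_update_add' {inst} v x a b := by
    obtain rfl : inst = instDecidableEqSum := Subsingleton.elim _ _
    obtain ⟨L, hL⟩ := exists_linearMap_word_update v x
    simp only [hL, map_add]
  map_update_smul' {inst} v x c a := by
    obtain rfl : inst = instDecidableEqSum := Subsingleton.elim _ _
    obtain ⟨L, hL⟩ := exists_linearMap_word_update v x
    simp only [hL, map_smul]

variable {d : ℕ}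

variable (k) in
/-- The linear form `∑ xₗ` over the variables `xₗ` in the fibre of `f` over `i`, with those in `I`
set to zero. -/
def fiberForm (f : Fin d → Fin n) (I : Finset (Fin d)) (i : Fin n) : S1 k d :=
  ∑ l with l ∉ I ∧ f l = i, xv l

variable (k) in
/-- Polarization along the fibres of `f`: each variable `xᵢ` is replaced by the sum of the variables
over it, and inclusion-exclusion keeps the terms in which all `d` variables occur. -/
def polarize (f : Fin d → Fin n) : KK k n →ₗ[k] KK k d :=
  ∑ I : Finset (Fin d), (-1 : ℤ) ^ I.card • (subst (fiberForm k f I)).toLinearMap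

lemma subst_fiberForm_varWord (f : Fin d → Fin n) (I : Finset (Fin d)) (w : Slot r t → Fin n) :
    subst (fiberForm k f I) (varWord k w) =
      ∑ u : Slot r t → Fin d with f ∘ u = w,
        if I ⊆ (Finset.univ.image u)ᶜ then varWord k u else 0 := by
  rw [subst_varWord, ← Finset.sum_filter, Finset.filter_filter]
  refine ((wordMap k d r t).map_sum_finset (fun _ l => xv l)
      fun x => Finset.univ.filter fun l => l ∉ I ∧ f l = w x).trans
    (Finset.sum_congr ?_ fun u _ => rfl)
  ext u
  simp only [Fintype.mem_piFinset, Finset.mem_filter_univ, forall_and, funext_iff,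
    Function.comp_apply, Finset.subset_compl_comm (s := I), Finset.image_subset_iff,
    Finset.mem_compl, Finset.mem_univ, forall_const, and_comm]

lemma polarize_varWord (f : Fin d → Fin n) (w : Slot r t → Fin n) :
    polarize k f (varWord k w) =
      ∑ u : Slot r t → Fin d with f ∘ u = w ∧ Function.Surjective u, varWord k u := by
  have inclusion_exclusion (u : Slot r t → Fin d) :
      ∑ I : Finset (Fin d), (-1 : ℤ) ^ I.card •
        (if I ⊆ (Finset.univ.image u)ᶜ then varWord k u else 0) =
      if Function.Surjective u then varWord k u else 0 := by
    simp only [smul_ite, smul_zero, ← Finset.sum_filter, ← Finset.mem_powerset,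
      Finset.filter_univ_mem]
    rw [← Finset.sum_smul, Finset.sum_powerset_neg_one_pow_card, ite_smul, one_smul, zero_smul]
    simp [Finset.eq_univ_iff_forall, Function.Surjective]
  simp only [polarize, LinearMap.sum_apply, LinearMap.smul_apply, AlgHom.toLinearMap_apply,
    subst_fiberForm_varWord, Finset.smul_sum]
  rw [Finset.sum_comm, Finset.sum_congr rfl fun u _ => inclusion_exclusion u,
    ← Finset.sum_filter, Finset.filter_filter]

lemma differential_polarize [NeZero (2 : k)] (f : Fin d → Fin n) (c : KK k n) :
    differential k d (polarize k f c) = polarize k f (differential k n c) := by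
  simp only [polarize, LinearMap.sum_apply, LinearMap.smul_apply, AlgHom.toLinearMap_apply, map_sum,
    map_zsmul, subst_differential]

variable (k n r t) in
/-- The span of the words in the variables with `r` legs and `t` edges. -/
def wordSpan : Submodule k (KK k n) :=
  Submodule.span k (Set.range fun w : Slot r t → Fin n => varWord k w)

variable (k r t d) in
/-- The span of the words in which every variable occurs exactly once. -/
def multilinearSpan : Submodule k (KK k d) :=
  Submodule.span k (Set.range fun β : Slot r t ≃ Fin d => varWord k β)

lemma bijective_of_surjective {u : Slot r t → Fin (Fintype.card (Slot r t))}
    (hu : Function.Surjective u) : Function.Bijective u :=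
  (Fintype.bijective_iff_surjective_and_card u).2 ⟨hu, (Fintype.card_fin _).symm⟩

lemma polarize_mem_multilinearSpan (f : Fin (Fintype.card (Slot r t)) → Fin n) {c : KK k n}
    (hc : c ∈ wordSpan k n r t) : polarize k f c ∈ multilinearSpan k r t _ := by
  suffices h : wordSpan k n r t ≤ (multilinearSpan k r t _).comap (polarize k f) from h hc
  rw [wordSpan, Submodule.span_le]
  rintro _ ⟨w, rfl⟩
  rw [SetLike.mem_coe, Submodule.mem_comap, polarize_varWord]
  refine Submodule.sum_mem _ fun u hu => Submodule.subset_span ?_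
  exact ⟨Equiv.ofBijective u (bijective_of_surjective (Finset.mem_filter.1 hu).2.2), rfl⟩

lemma sum_renameVars_polarize {c : KK k n} (hc : c ∈ wordSpan k n r t) :
    ∑ f : Fin (Fintype.card (Slot r t)) → Fin n, renameVars k f (polarize k f c) =
      Finset.card {u : Slot r t → Fin (Fintype.card (Slot r t)) | Function.Surjective u} • c := by
  let L : KK k n →ₗ[k] KK k n :=
    ∑ f : Fin (Fintype.card (Slot r t)) → Fin n, (renameVars k f).toLinearMap ∘ₗ polarize k f
  let R : KK k n →ₗ[k] KK k n :=
    Finset.card {u : Slot r t → Fin (Fintype.card (Slot r t)) | Function.Surjective u} •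
      LinearMap.id
  suffices h : Set.EqOn L R (Set.range fun w : Slot r t → Fin n => varWord k w) by
    simpa [L, R] using LinearMap.eqOn_span h hc
  rintro _ ⟨w, rfl⟩
  have unique_relabelling {u : Slot r t → Fin (Fintype.card (Slot r t))}
      (hu : Function.Surjective u) :
      ∑ f, (if f ∘ u = w then varWord k w else 0) = varWord k w := by
    let e := Equiv.ofBijective u (bijective_of_surjective hu)
    have comp_iff (f : Fin (Fintype.card (Slot r t)) → Fin n) :
        f ∘ u = w ↔ f = w ∘ e.symm := (e.eq_comp_symm f w).symm
    simp [comp_iff]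
  have relabel (f : Fin (Fintype.card (Slot r t)) → Fin n) :
      renameVars k f (polarize k f (varWord k w)) =
        ∑ u : Slot r t → Fin (Fintype.card (Slot r t)) with Function.Surjective u,
          if f ∘ u = w then varWord k w else 0 := by
    rw [polarize_varWord, map_sum, ← Finset.sum_filter, Finset.filter_filter]
    refine Finset.sum_congr (by simp only [and_comm]) fun u hu => ?_
    rw [renameVars_varWord, (Finset.mem_filter.1 hu).2.2]
  simp only [L, R, LinearMap.sum_apply, LinearMap.comp_apply, AlgHom.toLinearMap_apply, relabel,
    LinearMap.smul_apply, LinearMap.id_apply]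
  rw [Finset.sum_comm, ← Finset.sum_const]
  exact Finset.sum_congr rfl fun u hu => unique_relabelling (Finset.mem_filter.1 hu).2

lemma mem_cyclePowAddBoundaries_of_multilinear [CharZero k]
    (multilinear_case : ∀ v ∈ multilinearSpan k r t (Fintype.card (Slot r t)),
      differential k _ v = 0 → v ∈ cyclePowAddBoundaries k _ r t)
    {c : KK k n} (hc : c ∈ wordSpan k n r t) (hdc : differential k n c = 0) :
    c ∈ cyclePowAddBoundaries k n r t := by
  have sum_mem : ∑ f : Fin (Fintype.card (Slot r t)) → Fin n, renameVars k f (polarize k f c) ∈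
      cyclePowAddBoundaries k n r t := by
    refine Submodule.sum_mem _ fun f _ => renameVars_mem_cyclePowAddBoundaries f
      (multilinear_case _ (polarize_mem_multilinearSpan f hc) ?_)
    rw [differential_polarize, hdc, map_zero]
  rw [sum_renameVars_polarize hc, ← Nat.cast_smul_eq_nsmul k] at sum_mem
  refine (Submodule.smul_mem_iff _ (Nat.cast_ne_zero.2 (Finset.card_ne_zero.2 ?_))).1 sum_mem
  exact ⟨Fintype.equivFin _, by simpa using (Fintype.equivFin (Slot r t)).surjective⟩

end Polarization

section Peeling

variable {r r₁ r₂ t t₁ t₂ : ℕ}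

/-- The slots of a product of two words, whose legs and edges are shuffled by `er` and `et`. -/
def slotSum (er : Fin r₁ ⊕ Fin r₂ ≃ Fin r) (et : Fin t₁ ⊕ Fin t₂ ≃ Fin t) :
    Slot r₁ t₁ ⊕ Slot r₂ t₂ ≃ Slot r t :=
  (Equiv.sumSumSumComm _ _ _ _).trans
    (er.sumCongr ((Equiv.sumSumSumComm _ _ _ _).trans (et.sumCongr et)))

lemma exists_word_eq_smul_mul (er : Fin r₁ ⊕ Fin r₂ ≃ Fin r) (et : Fin t₁ ⊕ Fin t₂ ≃ Fin t) :
    ∃ ε : ℤ, ∀ (n : ℕ) (v : Slot r t → S1 k n), word v =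
      ε • (word (v ∘ slotSum er et ∘ Sum.inl) * word (v ∘ slotSum er et ∘ Sum.inr)) := by
  obtain rfl : t = t₁ + t₂ := by simpa using (Fintype.card_congr et).symm
  let shuffle : Equiv.Perm (Fin (t₁ + t₂)) := finSumFinEquiv.symm.trans et
  refine ⟨Equiv.Perm.sign shuffle, fun n v => ?_⟩
  have legs : ∏ s, (v (leg s) : S k n) =
      (∏ s, (v (leg (er (Sum.inl s))) : S k n)) * ∏ s, (v (leg (er (Sum.inr s))) : S k n) := by
    rw [← Equiv.prod_comp er, Fintype.prod_sum_type]
  have edges : Fin.append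
      (fun j => mulW (v (left (et (Sum.inl j)))) (v (right (et (Sum.inl j)))))
      (fun j => mulW (v (left (et (Sum.inr j)))) (v (right (et (Sum.inr j))))) =
      (fun j => mulW (v (left j)) (v (right j))) ∘ shuffle := by
    funext j
    refine Fin.addCases (fun j => ?_) (fun j => ?_) j <;> simp [shuffle]
  have product : word (v ∘ slotSum er et ∘ Sum.inl) * word (v ∘ slotSum er et ∘ Sum.inr) =
      (Equiv.Perm.sign shuffle : ℤ) • word v := by
    rw [word, word, Algebra.TensorProduct.tmul_mul_tmul, ExteriorAlgebra.ιMulti_mul_ιMulti, word,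
      ← TensorProduct.tmul_smul, legs, ← Units.smul_def, ← AlternatingMap.map_perm, ← edges]
    rfl
  rw [product, smul_smul, ← Units.val_mul, Int.units_mul_self, Units.val_one, one_smul]

/-- The filling of the slots that puts the left end of each edge `j` on the level of the leg `l j`,
and leaves all right ends on levels of their own. -/
def column (l : Fin t → Fin r) : Slot r t → Fin r ⊕ Fin t :=
  Sum.elim Sum.inl (Sum.elim (Sum.inl ∘ l) Sum.inr)

variable (k) in
/-- The antisymmetrizations of words along the levels of `column l` lie in the span of the `r`-fold
products of cycles `z_{a,b}`. -/
def IsPeelable (l : Fin t → Fin r) : Prop :=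
  ∀ (n : ℕ) (w : Slot r t → Fin n),
    alternatingSum (column l) (fun σ => varWord k (w ∘ σ)) ∈ cycleSpan k n ^ r

lemma column_comp_slotSum {er : Fin r₁ ⊕ Fin r₂ ≃ Fin r} {et : Fin t₁ ⊕ Fin t₂ ≃ Fin t}
    {l : Fin t → Fin r} {l₁ : Fin t₁ → Fin r₁} {l₂ : Fin t₂ → Fin r₂}
    (hl : l ∘ et = er ∘ Sum.map l₁ l₂) :
    column l ∘ slotSum er et =
      ((Equiv.sumSumSumComm _ _ _ _).trans (er.sumCongr et)) ∘
        Sum.map (column l₁) (column l₂) := by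
  have hl₁ (j : Fin t₁) : l (et (Sum.inl j)) = er (Sum.inl (l₁ j)) := congrFun hl (Sum.inl j)
  have hl₂ (j : Fin t₂) : l (et (Sum.inr j)) = er (Sum.inr (l₂ j)) := congrFun hl (Sum.inr j)
  funext x
  rcases x with (s | j | j) | (s | j | j) <;> simp [column, slotSum, hl₁, hl₂]

lemma IsPeelable.shuffle {er : Fin r₁ ⊕ Fin r₂ ≃ Fin r} {et : Fin t₁ ⊕ Fin t₂ ≃ Fin t}
    {l : Fin t → Fin r} {l₁ : Fin t₁ → Fin r₁} {l₂ : Fin t₂ → Fin r₂}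
    (hl : l ∘ et = er ∘ Sum.map l₁ l₂) (h₁ : IsPeelable k l₁) (h₂ : IsPeelable k l₂) :
    IsPeelable k l := by
  intro n w
  obtain rfl : r = r₁ + r₂ := by simpa using (Fintype.card_congr er).symm
  obtain ⟨ε, hε⟩ := exists_word_eq_smul_mul (k := k) er et
  have factor (σ : Equiv.Perm (Slot r₁ t₁)) (τ : Equiv.Perm (Slot r₂ t₂)) :
      varWord k (w ∘ (slotSum er et).permCongr (Equiv.Perm.sumCongr σ τ)) =
        ε • (varWord k ((w ∘ slotSum er et ∘ Sum.inl) ∘ σ) *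
          varWord k ((w ∘ slotSum er et ∘ Sum.inr) ∘ τ)) := by
    rw [varWord, hε, varWord, varWord]
    congr 3 <;> funext x <;> simp
  have splits : alternatingSum (column l) (fun σ => varWord k (w ∘ σ)) =
      ε • (alternatingSum (column l₁) (fun σ => varWord k ((w ∘ slotSum er et ∘ Sum.inl) ∘ σ)) *
        alternatingSum (column l₂) (fun σ => varWord k ((w ∘ slotSum er et ∘ Sum.inr) ∘ σ))) := by
    rw [← alternatingSum_permCongr (slotSum er et), column_comp_slotSum hl,
      alternatingSum_comp_injective (Equiv.injective _), alternatingSum_sumMap]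
    simp only [alternatingSum, Finset.sum_mul_sum, Finset.smul_sum]
    refine Finset.sum_congr rfl fun σ _ => Finset.sum_congr rfl fun τ _ => ?_
    rw [factor, smul_mul_smul_comm, mul_smul, smul_comm ε, smul_comm ε]
  have pow_eq : cycleSpan k n ^ (r₁ + r₂) = cycleSpan k n ^ r₁ * cycleSpan k n ^ r₂ :=
    pow_add (cycleSpan k n) r₁ r₂
  rw [splits, pow_eq]
  exact zsmul_mem (Submodule.mul_mem_mul (h₁ n _) (h₂ n _)) ε

/-- The slots of a word with one leg: the level that is alternated in `zel`, in the order of its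
first argument, and the right ends. -/
def singleLegSlots (t : ℕ) : Fin (t + 1) ⊕ Fin t ≃ Slot 1 t :=
  ((finSumFinEquiv.symm.trans (Equiv.sumComm _ _)).sumCongr (Equiv.refl _)).trans
    (Equiv.sumAssoc _ _ _)

lemma isPeelable_of_single_leg (l : Fin t → Fin 1) : IsPeelable k l := by
  intro n w
  have levels : column l ∘ singleLegSlots t = Sum.map (fun _ => 0) id := by
    funext x
    rcases x with x | j
    · refine Fin.lastCases ?_ (fun j => ?_) x <;>
        simp [column, singleLegSlots, Subsingleton.elim _ (0 : Fin 1)]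
    · simp [column, singleLegSlots]
  have factors (σ : Equiv.Perm (Fin (t + 1))) :
      varWord k (w ∘ (singleLegSlots t).permCongr (Equiv.Perm.sumCongr σ 1)) =
        (X (w (singleLegSlots t (Sum.inl (σ (Fin.last t))))) : S k n) ⊗ₜ[k]
          ιMulti k t fun j => mulW (xv (w (right j)))
            (xv (w (singleLegSlots t (Sum.inl (σ j.castSucc))))) := by
    have leg_eq : leg 0 = singleLegSlots t (Sum.inl (Fin.last t)) := by simp [singleLegSlots]
    have left_eq (j : Fin t) : left j = singleLegSlots t (Sum.inl j.castSucc) := by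
      simp [singleLegSlots]
    have right_eq (j : Fin t) : right j = singleLegSlots t (Sum.inr j) := rfl
    simp only [mulW_comm (xv (w (right _)))]
    rw [varWord, word, Fintype.prod_unique]
    simp [leg_eq, left_eq, right_eq, xv]
  rw [← alternatingSum_permCongr (singleLegSlots t), levels, alternatingSum_sumMap,
    pow_one (cycleSpan k n)]
  refine Submodule.subset_span ⟨t, fun i => w (singleLegSlots t (Sum.inl i)),
    fun j => w (right j), ?_⟩
  simp only [alternatingSum_id, alternatingSum_const, factors]
  rfl

lemma isPeelable (l : Fin t → Fin r) : IsPeelable k l := by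
  induction r generalizing t with
  | zero =>
    obtain rfl : t = 0 := by
      rcases t with _ | t
      · rfl
      · exact (l 0).elim0
    intro n w
    refine sum_mem fun σ _ => zsmul_mem (?_ : varWord k (w ∘ σ) ∈ _) _
    have word_eq_one : varWord k (w ∘ σ) = 1 := by
      simp [varWord, word, Algebra.TensorProduct.one_def]
    rw [word_eq_one, pow_zero (cycleSpan k n)]
    exact Submodule.one_le.1 le_rfl
  | succ r ih =>
    let A : Finset (Fin t) := {j | l j ≠ Fin.last r}
    let et := finSumEquivOfFinset (s := A) rfl rfl
    have ne_last (j : Fin A.card) : l (et (Sum.inl j)) ≠ Fin.last r := by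
      rw [finSumEquivOfFinset_inl]
      exact (Finset.mem_filter.1 (A.orderEmbOfFin_mem rfl j)).2
    have eq_last (j : Fin Aᶜ.card) : l (et (Sum.inr j)) = Fin.last r := by
      rw [finSumEquivOfFinset_inr]
      have mem_compl := Aᶜ.orderEmbOfFin_mem rfl j
      rwa [Finset.mem_compl, Finset.mem_filter_univ, not_not] at mem_compl
    refine IsPeelable.shuffle (er := finSumFinEquiv) (et := et) ?_
      (ih fun j => (l (et (Sum.inl j))).castPred (ne_last j)) (isPeelable_of_single_leg fun _ => 0)
    funext x
    rcases x with j | j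
    · simp [Fin.ext_iff]
    · simp [eq_last, Fin.ext_iff]

end Peeling

section AlternatingWords

variable {r t : ℕ}

variable (k) in
/-- The antisymmetrization of the word `varWord k w` along the level sets of the filling `h`. -/
def alternatingWord (h : Slot r t → ℕ) (w : Slot r t → Fin n) : KK k n :=
  alternatingSum h fun σ => varWord k (w ∘ σ)

lemma alternatingWord_comp_flipEdges (h : Slot r t → ℕ) (w : Slot r t → Fin n)
    (A : Finset (Fin t)) :
    alternatingWord k (h ∘ flipEdges A) (w ∘ flipEdges A) = alternatingWord k h w := by
  rw [alternatingWord, alternatingWord, ← alternatingSum_permCongr (flipEdges A) h]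
  congr 1
  funext σ
  rw [varWord, varWord, ← word_comp_flipEdges _ A]
  rfl

section Vanishing

variable [CharZero k] {h : Slot r t → ℕ}

lemma alternatingWord_eq_zero {τ : Equiv.Perm (Slot r t)} (hτ : h ∘ τ = h)
    (odd : ∀ v : Slot r t → S1 k n, (Equiv.Perm.sign τ : ℤ) • word (v ∘ τ) = -word v)
    (w : Slot r t → Fin n) : alternatingWord k h w = 0 := by
  have : IsAddTorsionFree (KK k n) := IsAddTorsionFree.of_isTorsionFree k _
  exact alternatingSum_eq_zero hτ fun σ => odd fun x => xv (w (σ x))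

lemma alternatingWord_eq_zero_of_legs {s s' : Fin r} (hs : s ≠ s')
    (level : h (leg s) = h (leg s')) (w : Slot r t → Fin n) : alternatingWord k h w = 0 := by
  refine alternatingWord_eq_zero (comp_swap_eq level) (fun v => ?_) w
  rw [Equiv.Perm.sign_swap (by simpa using hs), word_comp_swap_leg]
  simp

lemma alternatingWord_eq_zero_of_loop {j : Fin t} (level : h (left j) = h (right j))
    (w : Slot r t → Fin n) : alternatingWord k h w = 0 := by
  refine alternatingWord_eq_zero (comp_swap_eq level) (fun v => ?_) w
  rw [Equiv.Perm.sign_swap (by simp), ← flipEdges_singleton, word_comp_flipEdges]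
  simp

lemma alternatingWord_eq_zero_of_parallel {j j' : Fin t} (hj : j ≠ j')
    (level_left : h (left j) = h (left j')) (level_right : h (right j) = h (right j'))
    (w : Slot r t → Fin n) : alternatingWord k h w = 0 := by
  refine alternatingWord_eq_zero (τ := Equiv.swap (left j) (left j') *
    Equiv.swap (right j) (right j')) ?_ (fun v => ?_) w
  · rw [Equiv.Perm.coe_mul, ← Function.comp_assoc, comp_swap_eq level_left,
      comp_swap_eq level_right]
  · rw [word_comp_swap_mul_swap v hj, Equiv.Perm.sign_mul, Equiv.Perm.sign_swap (by simpa using hj),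
      Equiv.Perm.sign_swap (by simpa using hj)]
    simp

lemma alternatingWord_eq_zero_of_not_injective
    (oriented : ∀ j, h (left j) ≤ h (right j))
    (not_injective : ¬Function.Injective fun x => (h x, h (flipEdges Finset.univ x)))
    (w : Slot r t → Fin n) : alternatingWord k h w = 0 := by
  by_contra nonzero
  have strict (j : Fin t) : h (left j) < h (right j) := (oriented j).lt_of_ne fun level =>
    nonzero (alternatingWord_eq_zero_of_loop level w)
  have legs_injective (s s' : Fin r) (level : h (leg s) = h (leg s')) : s = s' := by
    by_contra hs
    exact nonzero (alternatingWord_eq_zero_of_legs hs level w)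
  have edges_injective (j j' : Fin t) (level_left : h (left j) = h (left j'))
      (level_right : h (right j) = h (right j')) : j = j' := by
    by_contra hj
    exact nonzero (alternatingWord_eq_zero_of_parallel hj level_left level_right w)
  refine not_injective fun x y hxy => ?_
  obtain ⟨level, partner_level⟩ := Prod.mk.inj hxy
  rcases x with s | j | j <;> rcases y with s' | j' | j' <;>
    simp only [flipEdges_leg, flipEdges_left, flipEdges_right, Finset.mem_univ, if_true]
      at partner_level
  · rw [legs_injective s s' level]
  · linarith [strict j']
  · linarith [strict j']
  · linarith [strict j]
  · rw [edges_injective j j' level partner_level]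
  · linarith [strict j, strict j']
  · linarith [strict j]
  · linarith [strict j, strict j']
  · rw [edges_injective j j' partner_level level]

end Vanishing

lemma alternatingWord_mem_of_legs [CharZero k] {h : Slot r t → ℕ}
    (left_mem : ∀ j, ∃ s, h (leg s) = h (left j)) (w : Slot r t → Fin n) :
    alternatingWord k h w ∈ cycleSpan k n ^ r := by
  choose l hl using left_mem
  have refines : h = Sum.elim (h ∘ leg) (h ∘ right) ∘ column l := by
    funext x
    rcases x with s | j | j <;> simp [column, hl]
  have average := alternatingSum_alternatingSum (Sum.elim (h ∘ leg) (h ∘ right)) (column l)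
    fun σ => varWord k (w ∘ σ)
  rw [← refines] at average
  have card_ne_zero :
      (Finset.card {τ : Equiv.Perm (Slot r t) | column l ∘ τ = column l} : k) ≠ 0 := by
    rw [Nat.cast_ne_zero]
    exact Finset.card_ne_zero_of_mem (a := 1) (by simp)
  rw [alternatingWord, ← (cycleSpan k n ^ r).smul_mem_iff card_ne_zero, Nat.cast_smul_eq_nsmul,
    ← average]
  exact sum_mem fun σ _ => zsmul_mem (isPeelable l n (w ∘ σ)) _

lemma alternatingWord_mem_of_oriented [CharZero k] {h : Slot r t → ℕ} (content_zero : content h = 0)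
    (oriented : ∀ j, h (left j) ≤ h (right j)) (w : Slot r t → Fin n) :
    alternatingWord k h w ∈ cycleSpan k n ^ r := by
  by_cases nonzero : alternatingWord k h w = 0
  · rw [nonzero]
    exact zero_mem _
  have pairs_injective : Function.Injective fun x => (h x, h (flipEdges Finset.univ x)) := by
    by_contra not_injective
    exact nonzero (alternatingWord_eq_zero_of_not_injective oriented not_injective w)
  have involutive : Function.Involutive (flipEdges (r := r) (t := t) Finset.univ) := by
    rintro (s | j | j) <;> simp
  refine alternatingWord_mem_of_legs (fun j => ?_) w
  have strict : h (left j) < h (flipEdges Finset.univ (left j)) := by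
    simpa using (oriented j).lt_of_ne fun level =>
      nonzero (alternatingWord_eq_zero_of_loop level w)
  obtain ⟨s | i | i, level, fixed⟩ :=
    exists_fixed_of_content_eq_zero involutive pairs_injective content_zero strict
  · exact ⟨s, level⟩
  all_goals simp at fixed

lemma alternatingWord_mem_of_content_eq_zero [CharZero k] {h : Slot r t → ℕ}
    (content_zero : content h = 0) (w : Slot r t → Fin n) :
    alternatingWord k h w ∈ cycleSpan k n ^ r := by
  let A : Finset (Fin t) := {j | h (right j) < h (left j)}
  rw [← alternatingWord_comp_flipEdges h w A]
  refine alternatingWord_mem_of_oriented ((content_comp_equiv _ h).trans content_zero)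
    (fun j => ?_) _
  by_cases hj : h (right j) < h (left j)
  · simp [A, hj, hj.le]
  · simp [A, hj, not_lt.1 hj]

end AlternatingWords

section MultilinearCycles

variable {d r t : ℕ}

lemma multilinearSpan_le_Kt : multilinearSpan k r t d ≤ Kt k d t := by
  rw [multilinearSpan, Submodule.span_le]
  rintro _ ⟨β, rfl⟩
  exact tmul_ιMulti_mem_Kt _ _

lemma permRep_mem_multilinearSpan (σ : Equiv.Perm (Fin d)) {v : KK k d}
    (hv : v ∈ multilinearSpan k r t d) : permRep k d σ v ∈ multilinearSpan k r t d := by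
  suffices h : multilinearSpan k r t d ≤ (multilinearSpan k r t d).comap (permRep k d σ) from h hv
  rw [multilinearSpan, Submodule.span_le]
  rintro _ ⟨β, rfl⟩
  rw [SetLike.mem_coe, Submodule.mem_comap, permRep_varWord]
  exact Submodule.subset_span ⟨β.trans σ, rfl⟩

lemma sum_permRep_swap_sub_eq_laplacian [NeZero (2 : k)] {v : KK k d}
    (hv : v ∈ multilinearSpan k r t d) :
    ∑ x, ∑ y, permRep k d (Equiv.swap x y) v - Fintype.card (Fin d) • v = laplacian k d v := by
  let transpositionSum : KK k d →ₗ[k] KK k d :=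
    ∑ x, ∑ y, permRep k d (Equiv.swap x y) - Fintype.card (Fin d) • LinearMap.id
  suffices h : Set.EqOn transpositionSum (laplacian k d) (multilinearSpan k r t d) by
    simpa [transpositionSum, LinearMap.sum_apply] using h hv
  apply LinearMap.eqOn_span
  rintro _ ⟨β, rfl⟩
  have swap_values (x y : Slot r t) :
      permRep k d (Equiv.swap (β x) (β y)) (varWord k β) = varWord k (β ∘ Equiv.swap x y) := by
    rw [permRep_varWord, β.injective.swap_comp]
  have reindex : ∑ x, ∑ y, permRep k d (Equiv.swap x y) (varWord k β) =
      ∑ x, ∑ y, varWord k (β ∘ Equiv.swap x y) := by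
    refine (Fintype.sum_equiv β _ _ fun x => Fintype.sum_equiv β _ _ fun y => ?_).symm
    exact (swap_values x y).symm
  simp only [laplacian_varWord, transpositionSum, LinearMap.sub_apply, LinearMap.sum_apply,
    LinearMap.smul_apply, LinearMap.id_apply, Fintype.card_congr β, reindex]

lemma alternatingSum_permRep_mem_of_content_eq_zero [CharZero k] {g : Fin d → ℕ}
    (content_zero : content g = 0) {v : KK k d} (hv : v ∈ multilinearSpan k r t d) :
    alternatingSum g (fun σ => permRep k d σ v) ∈ cycleSpan k d ^ r := by
  induction hv using Submodule.span_induction with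
  | mem v hv =>
    obtain ⟨β, rfl⟩ := hv
    rw [← alternatingSum_permCongr β]
    have relabel (σ : Equiv.Perm (Slot r t)) :
        permRep k d (β.permCongr σ) (varWord k β) = varWord k (β ∘ σ) := by
      rw [permRep_varWord]
      congr 1
      funext x
      simp
    simp only [relabel]
    exact alternatingWord_mem_of_content_eq_zero ((content_comp_equiv β g).trans content_zero) β
  | zero => simp [alternatingSum]
  | add v w _ _ hv hw =>
    simp only [alternatingSum, map_add, smul_add, Finset.sum_add_distrib] at hv hw ⊢
    exact add_mem hv hw
  | smul a v _ hv =>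
    simp only [alternatingSum, map_smul, smul_comm _ a, ← Finset.smul_sum] at hv ⊢
    exact Submodule.smul_mem _ a hv

lemma mem_cyclePowAddBoundaries_of_mem_multilinearSpan [CharZero k] {v : KK k d}
    (hv : v ∈ multilinearSpan k r t d) (hdv : differential k d v = 0) :
    v ∈ cyclePowAddBoundaries k d r t := by
  let cycles : Submodule k (KK k d) := multilinearSpan k r t d ⊓ (differential k d).ker
  suffices h : cycles ≤ cyclePowAddBoundaries k d r t from h ⟨hv, hdv⟩
  refine le_of_transpositions_of_content_zero (ρ := permRep k d) ?invariant ?transpositions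
    ?content_zero
  case invariant =>
    rintro σ v ⟨hv, hdv⟩
    refine ⟨permRep_mem_multilinearSpan σ hv, ?_⟩
    exact (subst_differential _ v).symm.trans (by rw [LinearMap.mem_ker.1 hdv, map_zero])
  case transpositions =>
    rintro v ⟨hv, hdv⟩
    rw [sum_permRep_swap_sub_eq_laplacian hv, laplacian_apply, LinearMap.mem_ker.1 hdv, map_zero,
      add_zero]
    exact Submodule.mem_sup_right
      (Submodule.mem_map_of_mem (codifferential_mem_Kt (multilinearSpan_le_Kt hv)))
  case content_zero =>
    rintro g content_zero v ⟨hv, -⟩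
    exact Submodule.mem_sup_left (alternatingSum_permRep_mem_of_content_eq_zero content_zero hv)

lemma mem_cyclePowAddBoundaries_of_mem_wordSpan [CharZero k] {c : KK k n}
    (hc : c ∈ wordSpan k n r t) (hdc : differential k n c = 0) :
    c ∈ cyclePowAddBoundaries k n r t :=
  mem_cyclePowAddBoundaries_of_multilinear
    (fun _ => mem_cyclePowAddBoundaries_of_mem_multilinearSpan) hc hdc

end MultilinearCycles

section HomogeneousParts

lemma homogeneousComponent_add_mul {σ R : Type*} [CommSemiring R] {a : ℕ} {f : MvPolynomial σ R}
    (hf : f.IsHomogeneous a) (b : ℕ) (g : MvPolynomial σ R) :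
    homogeneousComponent (a + b) (f * g) = f * homogeneousComponent b g := by
  induction g using MvPolynomial.induction_on' with
  | monomial d c =>
    have hd : (monomial d c : MvPolynomial σ R).IsHomogeneous d.degree :=
      isHomogeneous_monomial c rfl
    simp only [homogeneousComponent_of_mem hd, homogeneousComponent_of_mem (hf.mul hd),
      add_right_inj, mul_ite, mul_zero]
  | add p q hp hq => simp only [mul_add, map_add, hp, hq]

variable (k n) in
/-- The projection of `S ⊗ Λ(S₂)` onto `S_e ⊗ Λ(S₂)`. -/
def homogeneousPart (e : ℕ) : KK k n →ₗ[k] KK k n :=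
  TensorProduct.map (homogeneousComponent e) LinearMap.id

lemma homogeneousPart_tmul (e : ℕ) (f : S k n) (ω : ExteriorAlgebra k (S2 k n)) :
    homogeneousPart k n e (f ⊗ₜ ω) = homogeneousComponent e f ⊗ₜ ω := rfl

lemma differential_homogeneousPart (e : ℕ) (c : KK k n) :
    differential k n (homogeneousPart k n e c) =
      homogeneousPart k n (2 + e) (differential k n c) := by
  induction c using TensorProduct.induction_on with
  | zero => simp
  | add x y hx hy => simp only [map_add, hx, hy]
  | tmul f ω =>
    have shift (i l : Fin n) : homogeneousComponent (2 + e) (X i * (X l * f)) =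
        X i * (X l * homogeneousComponent e f) := by
      rw [← mul_assoc, ← mul_assoc]
      exact homogeneousComponent_add_mul ((isHomogeneous_X k i).mul (isHomogeneous_X k l)) e f
    simp [differential, homogeneousPart_tmul, shift]

lemma eventually_sum_homogeneousComponent_eq {f : S k n} (hf : f ∈ Seven k n) :
    ∀ᶠ N in Filter.atTop, ∑ e ∈ Finset.range N, homogeneousComponent (2 * e) f = f := by
  induction hf using Submodule.iSup_induction' with
  | mem e f hf =>
    filter_upwards [Filter.eventually_gt_atTop e] with N hN
    simp [homogeneousComponent_of_mem hf, hN]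
  | zero => simp
  | add f g _ _ hf hg =>
    filter_upwards [hf, hg] with N hfN hgN
    simp only [map_add, Finset.sum_add_distrib, hfN, hgN]

lemma eventually_sum_homogeneousPart_eq {t : ℕ} {c : KK k n} (hc : c ∈ KtEven k n t) :
    ∀ᶠ N in Filter.atTop, ∑ e ∈ Finset.range N, homogeneousPart k n (2 * e) c = c := by
  obtain ⟨x, rfl⟩ := hc
  induction x using TensorProduct.induction_on with
  | zero => simp
  | add x y hx hy =>
    filter_upwards [hx, hy] with N hxN hyN
    simp only [map_add, Finset.sum_add_distrib, hxN, hyN]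
  | tmul f ω =>
    filter_upwards [eventually_sum_homogeneousComponent_eq f.2] with N hN
    simp only [TensorProduct.map_tmul, homogeneousPart_tmul, Submodule.subtype_apply,
      ← TensorProduct.sum_tmul, hN]

lemma KtEven_le_Kt (t : ℕ) : KtEven k n t ≤ Kt k n t := by
  rw [KtEven, Kt, ← LinearMap.comp_id (⋀[k]^t (S2 k n)).subtype,
    ← LinearMap.id_comp (Seven k n).subtype, TensorProduct.map_comp, LinearMap.comp_id]
  exact LinearMap.range_comp_le_range _ _

lemma homogeneousSubmodule_eq_span_prod_X {σ R : Type*} [CommSemiring R] (e : ℕ) :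
    homogeneousSubmodule σ R e =
      Submodule.span R (Set.range fun w : Fin e → σ => ∏ s, X (w s)) := by
  rw [← homogeneousSubmodule_one_pow, homogeneousSubmodule_one_eq_span_X, Submodule.span_pow]
  congr 1
  ext f
  simp only [Set.mem_pow, List.prod_ofFn, Set.mem_range]
  constructor
  · rintro ⟨x, rfl⟩
    choose w hw using fun s => (x s).2
    exact ⟨w, by simp only [hw]⟩
  · rintro ⟨w, rfl⟩
    exact ⟨fun s => ⟨X (w s), w s, rfl⟩, rfl⟩

lemma ιMulti_mem_span_q [NeZero (2 : k)] {t : ℕ} (m : Fin t → S2 k n) :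
    ιMulti k t m ∈ Submodule.span k
      (Set.range fun y : Fin t → Fin n × Fin n => ιMulti k t fun j => (q (y j).1 (y j).2)) := by
  have expand (p : S2 k n) :
      p = ∑ x : Fin n × Fin n, (2⁻¹ * hessianCoeff x.1 x.2 p) • q x.1 x.2 := by
    simp only [Fintype.sum_prod_type, mul_smul, ← Finset.smul_sum, sum_hessianCoeff_smul_q]
    rw [smul_smul, inv_mul_cancel₀ two_ne_zero, one_smul]
  rw [funext fun j => expand (m j), ← AlternatingMap.coe_multilinearMap, MultilinearMap.map_sum]
  refine sum_mem fun y _ => ?_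
  rw [MultilinearMap.map_smul_univ]
  exact Submodule.smul_mem _ _ (Submodule.subset_span ⟨y, rfl⟩)

lemma tmul_ιMulti_mem_wordSpan [NeZero (2 : k)] {e t : ℕ} {f : S k n} (hf : f.IsHomogeneous e)
    (m : Fin t → S2 k n) : f ⊗ₜ[k] ιMulti k t m ∈ wordSpan k n e t := by
  rw [← mem_homogeneousSubmodule, homogeneousSubmodule_eq_span_prod_X] at hf
  have h := Submodule.apply_mem_map₂ (TensorProduct.mk k _ _) hf (ιMulti_mem_span_q m)
  rw [Submodule.map₂_span_span] at h
  refine Submodule.span_mono ?_ h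
  rintro _ ⟨_, ⟨w, rfl⟩, _, ⟨y, rfl⟩, rfl⟩
  exact ⟨Sum.elim w (Sum.elim (fun j => (y j).1) fun j => (y j).2), rfl⟩

lemma homogeneousPart_mem_wordSpan [NeZero (2 : k)] {t : ℕ} (e : ℕ) {c : KK k n}
    (hc : c ∈ Kt k n t) : homogeneousPart k n e c ∈ wordSpan k n e t := by
  suffices h : Kt k n t ≤ (wordSpan k n e t).comap (homogeneousPart k n e) from h hc
  rw [Kt_eq_span, Submodule.span_le]
  rintro _ ⟨⟨f, m⟩, rfl⟩
  exact tmul_ιMulti_mem_wordSpan (homogeneousComponent_isHomogeneous e f) m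

end HomogeneousParts

section PairProducts

variable (k n) in
/-- The algebra `B` generated by the products `z_{a,b} · z_{a',b'}`. -/
def pairAlgebra : Subalgebra k (KK k n) := Algebra.adjoin k {v |
  ∃ (r : ℕ) (a : Fin (r + 1) → Fin n) (b : Fin r → Fin n)
    (r' : ℕ) (a' : Fin (r' + 1) → Fin n) (b' : Fin r' → Fin n),
    v = zel r (fun l => (xv (a l) : S1 k n)) (fun l => xv (b l)) *
      zel r' (fun l => (xv (a' l) : S1 k n)) (fun l => xv (b' l))}

lemma cycleSpan_pow_two_mul_le (e : ℕ) :
    cycleSpan k n ^ (2 * e) ≤ Subalgebra.toSubmodule (pairAlgebra k n) := by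
  have pairs_mem : cycleSpan k n ^ 2 ≤ Subalgebra.toSubmodule (pairAlgebra k n) := by
    rw [pow_two (cycleSpan k n), cycleSpan, Submodule.span_mul_span, Submodule.span_le]
    rintro _ ⟨_, ⟨r, a, b, rfl⟩, _, ⟨r', a', b', rfl⟩, rfl⟩
    exact Algebra.subset_adjoin ⟨r, a, b, r', a', b', rfl⟩
  induction e with
  | zero => exact Submodule.one_le.2 (one_mem (pairAlgebra k n))
  | succ e ih =>
    rw [mul_add_one, pow_add (cycleSpan k n), Submodule.mul_le]
    exact fun x hx y hy => mul_mem (S := Subalgebra k (KK k n)) (ih hx) (pairs_mem hy)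

lemma mem_pairAlgebra_sup_boundaries [CharZero k] {t : ℕ} {c : KK k n} (hc : c ∈ KtEven k n t)
    (hdc : differential k n c = 0) :
    c ∈ Subalgebra.toSubmodule (pairAlgebra k n) ⊔ (Kt k n (t + 1)).map (differential k n) := by
  obtain ⟨N, hN⟩ := (eventually_sum_homogeneousPart_eq hc).exists
  rw [← hN]
  refine sum_mem fun e _ => ?_
  have cycle : differential k n (homogeneousPart k n (2 * e) c) = 0 := by
    rw [differential_homogeneousPart, hdc, map_zero]
  have pairs : cyclePowAddBoundaries k n (2 * e) t ≤ _ :=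
    sup_le_sup_right (cycleSpan_pow_two_mul_le e) _
  exact pairs (mem_cyclePowAddBoundaries_of_mem_wordSpan
    (homogeneousPart_mem_wordSpan (2 * e) (KtEven_le_Kt t hc)) cycle)

end PairProducts

end VeroneseKoszul

/-- Let `B ⊆ K` be the `k`-subalgebra generated by `1` and all products
`z_{a,b} · z_{a',b'}` of two of the cycles `z_{a,b}` (over all lengths and sequences of
variables), and `B_t = B ∩ K_t`.  Then every Koszul cycle `c ∈ ker(d_t)` all of whose
homogeneous components have even internal degree can be written as `c = u + d_{t+1}(w)`
with `u ∈ B_t`, `w ∈ K_{t+1}`.  (Consequently the Koszul homology algebra of the second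
Veronese `S^(2)` is generated by its lowest linear strand.) -/
theorem veronese_koszul_homology_generated_by_pairs (k : Type) [Field k] [CharZero k] (n : ℕ)
    (D : ℕ → KK k n →ₗ[k] KK k n) (hD : IsKoszulDiff D)
    (t : ℕ) (c : KK k n) (hc : c ∈ KtEven k n t) (hcyc : D t c = 0) :
    ∃ u w : KK k n,
      u ∈ Algebra.adjoin k {v : KK k n |
          ∃ (r : ℕ) (a : Fin (r+1) → Fin n) (b : Fin r → Fin n)
            (r' : ℕ) (a' : Fin (r'+1) → Fin n) (b' : Fin r' → Fin n),
            v = zel r (fun l => (xv (a l) : S1 k n)) (fun l => xv (b l)) *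
                  zel r' (fun l => (xv (a' l) : S1 k n)) (fun l => xv (b' l))} ∧
      u ∈ Kt k n t ∧ w ∈ Kt k n (t+1) ∧ c = u + D (t+1) w := by
  have hcK : c ∈ Kt k n t := VeroneseKoszul.KtEven_le_Kt t hc
  rw [VeroneseKoszul.eqOn_differential hD t hcK] at hcyc
  obtain ⟨u, hu, _, ⟨w, hw, rfl⟩, hcu⟩ :=
    Submodule.mem_sup.1 (VeroneseKoszul.mem_pairAlgebra_sup_boundaries hc hcyc)
  refine ⟨u, w, hu, ?_, hw, ?_⟩
  · rw [eq_sub_of_add_eq hcu]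
    exact sub_mem hcK (VeroneseKoszul.differential_mem_Kt hw)
  · rw [VeroneseKoszul.eqOn_differential hD (t + 1) hw, hcu]

end
end

section
/- Fix t ≥ 0. If a finite k-linear combination Σ c_{(a,b)} · z_{a,b}, taken over distinct semistandard pairs (a,b) of sequences of variables with |a| = t+1 and |b| = t, lies in the image of d_{t+1} : K_{t+1} → K_t, then all coefficients c_{(a,b)} are zero; that is, the homology classes of the semistandard z_{a,b} are linearly independent in the Koszul homology H_t(𝔪²). -/
set_option maxHeartbeats 1000000
set_option synthInstance.maxHeartbeats 400000

open scoped TensorProduct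
open MvPolynomial

noncomputable section

variable (k : Type) [Field k] (n : ℕ)

variable {k n}

variable (k n)

variable {k n}

/-- A pair of sequences of variables `a = (x_{i_1},…,x_{i_{t+1}})`, `b = (x_{j_1},…,x_{j_t})`
is *semistandard* if `i_1 < ⋯ < i_{t+1}`, `j_1 ≤ ⋯ ≤ j_t` and `i_1 ≤ j_1`. -/
def Semistandard {n t : ℕ} (a : Fin (t+1) → Fin n) (b : Fin t → Fin n) : Prop :=
  StrictMono a ∧ Monotone b ∧ ∀ h : 0 < t, a 0 ≤ b ⟨0, h⟩

/-!
For derivations `δ_1, …, δ_t` of `S`, the map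
`f ⊗ m_1 ∧ ⋯ ∧ m_t ↦ f_1 · det (δ_i m_j)`, where `f_1` is the linear part of `f`, kills every
boundary, because the `S`-coefficients of a boundary lie in `𝔪²`. On `z_{a,b}` the Leibniz rule and
row operations turn its value into `± t! · b_1 ⋯ b_t · W`, where `W` is the determinant with rows
`(a_l)` and `(δ_j a_l)`. Take `δ_j = ∂/∂x_{A_j}`, `j = 1, …, t`, for a semistandard pair
`A = (A_0 < ⋯ < A_t)`, `B`, and extract the coefficient of `x_{A_0} · x_{B_1} ⋯ x_{B_t}`.
Semistandardness makes `A_0` the least index in this monomial, and from this it follows that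
`z_{A,B}` is the only semistandard cycle on which the resulting functional does not vanish.
-/

section DerivationMatrix

variable {R T : Type*} [CommRing R] [CommRing T] [Algebra R T] {t : ℕ}

/-- The square matrix with top row `(a_l)` and further rows `(δ_j a_l)`, a Wronskian matrix for a
family of derivations. Its determinant gives the Koszul pairing with the cycles `z_{a,b}`. -/
def derivationMatrix (δ : Fin t → Derivation R T T) (a : Fin (t + 1) → T) :
    Matrix (Fin (t + 1)) (Fin (t + 1)) T :=
  Matrix.of (Fin.cons a fun j l => δ j (a l))

theorem det_of_cons_eq_sum (a : Fin (t + 1) → T) (M : Fin t → Fin (t + 1) → T) :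
    (Matrix.of (Fin.cons a M : Fin (t + 1) → Fin (t + 1) → T)).det =
      ∑ σ : Equiv.Perm (Fin (t + 1)),
        (Equiv.Perm.sign σ : ℤ) • (a (σ 0) * ∏ j, M j (σ j.succ)) := by
  rw [← Matrix.det_transpose, Matrix.det_apply]
  simp [Fin.prod_univ_succ, Units.smul_def]

theorem det_derivation_mul (δ : Fin t → Derivation R T T) (a : Fin (t + 1) → T)
    (b : Fin t → T) :
    (Matrix.of (Fin.cons a fun j l => δ j (b j * a l) :
      Fin (t + 1) → Fin (t + 1) → T)).det = (∏ j, b j) * (derivationMatrix δ a).det := by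
  have scale_rows := Matrix.det_mul_column (Fin.cons 1 b : Fin (t + 1) → T) (derivationMatrix δ a)
  rw [Fin.prod_univ_succ, Fin.cons_zero, one_mul] at scale_rows
  simp only [Fin.cons_succ] at scale_rows
  rw [← scale_rows]
  -- By Leibniz, row `j + 1` is `b j` times `(δ j (a l))` plus `δ j (b j)` times row `0`.
  refine Matrix.det_eq_of_forall_row_eq_smul_add_const
    (Fin.cons 0 fun j => δ j (b j)) 0 rfl fun i l => ?_
  cases i using Fin.cases with
  | zero => simp [derivationMatrix]
  | succ j => simp [derivationMatrix, mul_comm, add_comm]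

theorem sum_sign_smul_mul_prod_derivation (δ : Fin t → Derivation R T T) (a : Fin (t + 1) → T)
    (b : Fin t → T) (τ : Equiv.Perm (Fin t)) :
    ∑ σ : Equiv.Perm (Fin (t + 1)), (Equiv.Perm.sign σ : ℤ) •
        (a (σ 0) * ∏ j, δ j (b (τ j) * a (σ (τ j).succ))) =
      (Equiv.Perm.sign τ : ℤ) • ((∏ j, b j) * (derivationMatrix δ a).det) := by
  let τ' : Equiv.Perm (Fin (t + 1)) := Equiv.Perm.decomposeFin.symm (0, τ)
  have τ'_zero : τ' 0 = 0 := by simp [τ']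
  have τ'_succ (j : Fin t) : τ' j.succ = (τ j).succ := by simp [τ']
  have sign_τ' : Equiv.Perm.sign τ' = Equiv.Perm.sign τ := by simp [τ']
  have sign_eq (σ : Equiv.Perm (Fin (t + 1))) :
      (Equiv.Perm.sign σ : ℤ) = Equiv.Perm.sign τ * Equiv.Perm.sign (σ * τ') := by
    rw [Equiv.Perm.sign_mul, sign_τ', Units.val_mul, mul_left_comm, Int.units_coe_mul_self, mul_one]
  rw [← Equiv.prod_comp τ b, ← det_derivation_mul δ a fun j => b (τ j), det_of_cons_eq_sum,
    Finset.smul_sum]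
  refine Fintype.sum_equiv (Equiv.mulRight τ') _ _ fun σ => ?_
  simp only [sign_eq σ, mul_smul, Equiv.coe_mulRight, Equiv.Perm.mul_apply, τ'_zero, τ'_succ]

theorem sum_sign_smul_mul_sum_sign_smul_prod_derivation (δ : Fin t → Derivation R T T)
    (a : Fin (t + 1) → T) (b : Fin t → T) :
    ∑ σ : Equiv.Perm (Fin (t + 1)), (Equiv.Perm.sign σ : ℤ) •
        (a (σ 0) * ∑ τ : Equiv.Perm (Fin t), (Equiv.Perm.sign τ : ℤ) •
          ∏ j, δ j (b (τ j) * a (σ (τ j).succ))) =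
      t.factorial • ((∏ j, b j) * (derivationMatrix δ a).det) := by
  calc
    _ = ∑ τ : Equiv.Perm (Fin t), (Equiv.Perm.sign τ : ℤ) •
          ∑ σ : Equiv.Perm (Fin (t + 1)), (Equiv.Perm.sign σ : ℤ) •
            (a (σ 0) * ∏ j, δ j (b (τ j) * a (σ (τ j).succ))) := by
      simp only [Finset.mul_sum, Finset.smul_sum, mul_smul_comm]
      rw [Finset.sum_comm]
      simp only [smul_comm (Equiv.Perm.sign (_ : Equiv.Perm (Fin t)) : ℤ)]
    _ = ∑ _τ : Equiv.Perm (Fin t), (∏ j, b j) * (derivationMatrix δ a).det := by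
      simp only [sum_sign_smul_mul_prod_derivation, smul_smul, Int.units_coe_mul_self, one_smul]
    _ = _ := by
      rw [Finset.sum_const, Finset.card_univ, Fintype.card_perm, Fintype.card_fin]

end DerivationMatrix

section Monomials

variable {R ι : Type*} [CommSemiring R]

theorem homogeneousComponent_mul_eq_zero_of_lt {d e : ℕ} (f : MvPolynomial ι R)
    {g : MvPolynomial ι R} (hg : g.IsHomogeneous e) (hde : d < e) :
    homogeneousComponent d (f * g) = 0 := by
  classical
  ext m
  rw [coeff_homogeneousComponent, coeff_zero, ite_eq_right_iff, coeff_mul]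
  refine fun hm => Finset.sum_eq_zero fun x hx => ?_
  rw [hg.coeff_eq_zero, mul_zero]
  rw [← Finset.HasAntidiagonal.mem_antidiagonal.1 hx, map_add] at hm
  omega

variable [DecidableEq ι] {t : ℕ}

/-- The exponent of the monomial `x_i x_{b_1} ⋯ x_{b_t}`, built from the multiset of its indices so
that equal exponents give equal multisets. -/
def consExponent (i : ι) (b : Fin t → ι) : ι →₀ ℕ :=
  Multiset.toFinsupp (i ::ₘ (List.ofFn b : Multiset ι))

theorem prod_map_X_eq_monomial (s : Multiset ι) :
    (s.map X).prod = (monomial (Multiset.toFinsupp s) 1 : MvPolynomial ι R) := by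
  induction s using Multiset.induction_on with
  | empty => simp
  | cons i s ih =>
    rw [Multiset.map_cons, Multiset.prod_cons, ih, ← Multiset.singleton_add, map_add,
      Multiset.toFinsupp_singleton, X, monomial_mul, one_mul]

theorem prod_X_mul_X_eq_monomial (i : ι) (b : Fin t → ι) :
    (∏ j, X (b j)) * X i = (monomial (consExponent i b) 1 : MvPolynomial ι R) := by
  rw [consExponent, ← prod_map_X_eq_monomial]
  simp [List.map_ofFn, List.prod_ofFn, mul_comm]

end Monomials

section PartialDerivatives

variable {R ι : Type*} [CommRing R] {t : ℕ}

theorem det_derivationMatrix_pderiv_self {A : Fin (t + 1) → ι} (hA : Function.Injective A) :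
    (derivationMatrix (fun j : Fin t => pderiv (R := R) (A j.succ)) fun l => X (A l)).det =
      X (A 0) := by
  classical
  rw [Matrix.det_of_isUpperTriangular, Fin.prod_univ_succ]
  · simp [derivationMatrix]
  · intro i l hli
    cases i using Fin.cases with
    | zero => exact absurd hli (Fin.not_lt_zero l)
    | succ j => simpa [derivationMatrix] using pderiv_X_of_ne (hA.ne hli.ne)

theorem exists_perm_of_coeff_det_ne_zero [DecidableEq ι] {A a : Fin (t + 1) → ι}
    {b : Fin t → ι} {m : ι →₀ ℕ}
    (hm : coeff m ((∏ j, X (b j)) * (derivationMatrix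
      (fun j : Fin t => pderiv (R := R) (A j.succ)) fun l => X (a l)).det) ≠ 0) :
    ∃ σ : Equiv.Perm (Fin (t + 1)),
      (∀ j : Fin t, a (σ j.succ) = A j.succ) ∧ consExponent (a (σ 0)) b = m := by
  rw [derivationMatrix, det_of_cons_eq_sum, Finset.mul_sum, coeff_sum] at hm
  obtain ⟨σ, -, hσ⟩ := Finset.exists_ne_zero_of_sum_ne_zero hm
  rw [mul_smul_comm, ← mul_assoc, prod_X_mul_X_eq_monomial, coeff_smul] at hσ
  have apply_eq (j : Fin t) : a (σ j.succ) = A j.succ := by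
    by_contra hj
    rw [Finset.prod_eq_zero (Finset.mem_univ j) (pderiv_X_of_ne hj)] at hσ
    simp at hσ
  refine ⟨σ, apply_eq, ?_⟩
  by_contra hexp
  simp [apply_eq, coeff_monomial, hexp] at hσ

end PartialDerivatives

namespace Semistandard

variable {t : ℕ} {A a : Fin (t + 1) → Fin n} {B b : Fin t → Fin n}

theorem zero_le_of_mem (h : Semistandard a b) {i : Fin n}
    (hi : i ∈ a 0 ::ₘ (List.ofFn b : Multiset (Fin n))) : a 0 ≤ i := by
  rw [Multiset.mem_cons, Multiset.mem_coe, List.mem_ofFn] at hi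
  obtain rfl | ⟨j, rfl⟩ := hi
  · exact le_rfl
  · exact (h.2.2 j.pos).trans (h.2.1 (Nat.zero_le j))

theorem apply_zero_eq_of_perm (hAB : Semistandard A B) (hab : Semistandard a b)
    {σ : Equiv.Perm (Fin (t + 1))} (hσ : ∀ j : Fin t, a (σ j.succ) = A j.succ)
    (hmon : a (σ 0) ::ₘ (List.ofFn b : Multiset (Fin n)) = A 0 ::ₘ List.ofFn B) :
    a (σ 0) = A 0 := by
  have a_zero_le : a 0 ≤ A 0 := by
    have A_zero_mem := hmon ▸ Multiset.mem_cons_self (A 0) _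
    obtain h | h := Multiset.mem_cons.1 A_zero_mem
    · exact h ▸ hab.1.monotone (Fin.zero_le _)
    · exact hab.zero_le_of_mem (Multiset.mem_cons_of_mem h)
  have σ_zero : σ 0 = 0 := by
    obtain ⟨i, hi⟩ := σ.surjective 0
    cases i using Fin.cases with
    | zero => exact hi
    | succ j => exact absurd (hAB.1 j.succ_pos) (by rw [← hσ, hi]; exact a_zero_le.not_gt)
  have A_zero_le : A 0 ≤ a (σ 0) := hAB.zero_le_of_mem (hmon ▸ Multiset.mem_cons_self _ _)
  rw [σ_zero] at A_zero_le ⊢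
  exact le_antisymm a_zero_le A_zero_le

theorem eq_of_perm_of_consExponent_eq (hAB : Semistandard A B) (hab : Semistandard a b)
    {σ : Equiv.Perm (Fin (t + 1))} (hσ : ∀ j : Fin t, a (σ j.succ) = A j.succ)
    (hexp : consExponent (a (σ 0)) b = consExponent (A 0) B) : a = A ∧ b = B := by
  have hmon := Multiset.toFinsupp.injective hexp
  have hzero := apply_zero_eq_of_perm hAB hab hσ hmon
  constructor
  · have comp_eq : a ∘ σ = A := funext (Fin.cases hzero hσ)
    rw [← hab.1.range_inj hAB.1, ← comp_eq, σ.surjective.range_comp]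
  · rw [hzero, Multiset.cons_inj_right, Multiset.coe_eq_coe] at hmon
    exact List.ofFn_injective
      (hmon.eq_of_sortedLE hab.2.1.sortedLE_ofFn hAB.2.1.sortedLE_ofFn)

end Semistandard

section KoszulPairing

variable {t : ℕ}

/-- The Jacobian determinant `det (δ_i m_j)`, as an alternating map of the quadratic forms `m_j`. -/
def jacobianDet (δ : Fin t → Derivation k (S k n) (S k n)) : S2 k n [⋀^Fin t]→ₗ[k] S k n :=
  ((MultilinearMap.mkPiAlgebra k (Fin t) (S k n)).compLinearMap
    fun j => (δ j).toLinearMap ∘ₗ (S2 k n).subtype).alternatization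

theorem jacobianDet_apply (δ : Fin t → Derivation k (S k n) (S k n)) (m : Fin t → S2 k n) :
    jacobianDet δ m =
      ∑ τ : Equiv.Perm (Fin t), (Equiv.Perm.sign τ : ℤ) • ∏ j, δ j (m (τ j) : S k n) := by
  simp [jacobianDet, MultilinearMap.alternatization_apply, Units.smul_def]

/-- The linear map `f ⊗ ω ↦ f_1 · det (δ_i m_j)` for `ω = m_1 ∧ ⋯ ∧ m_t`, where `f_1` is the linear
part of `f`; it is zero on `S ⊗ ⋀^s S_2` for `s ≠ t`. -/
def koszulPairing (δ : Fin t → Derivation k (S k n) (S k n)) : KK k n →ₗ[k] S k n :=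
  TensorProduct.lift ((LinearMap.mul k (S k n)).compl₁₂ (homogeneousComponent 1)
    (ExteriorAlgebra.liftAlternating (Pi.single t (jacobianDet δ))))

theorem koszulPairing_tmul_ιMulti (δ : Fin t → Derivation k (S k n) (S k n)) (f : S k n)
    (m : Fin t → S2 k n) :
    koszulPairing δ (f ⊗ₜ[k] ExteriorAlgebra.ιMulti k t m) =
      homogeneousComponent 1 f * jacobianDet δ m := by
  simp [koszulPairing, ExteriorAlgebra.liftAlternating_apply_ιMulti]

theorem Kt_le_of_forall_tmul_ιMulti_mem {P : Submodule k (KK k n)}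
    (hP : ∀ (f : S k n) (m : Fin t → S2 k n), f ⊗ₜ[k] ExteriorAlgebra.ιMulti k t m ∈ P) :
    Kt k n t ≤ P := by
  rw [← P.ker_mkQ, Kt, LinearMap.range_le_ker_iff]
  refine TensorProduct.ext (LinearMap.ext fun f => exteriorPower.linearMap_ext ?_)
  ext m
  simpa using hP f m

theorem koszulPairing_eq_zero_of_mem_boundaries (δ : Fin t → Derivation k (S k n) (S k n))
    {D : ℕ → KK k n →ₗ[k] KK k n} (hD : IsKoszulDiff D) {y : KK k n}
    (hy : y ∈ (Kt k n (t + 1)).map (D (t + 1))) : koszulPairing δ y = 0 := by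
  suffices h : Kt k n (t + 1) ≤ LinearMap.ker (koszulPairing δ ∘ₗ D (t + 1)) by
    obtain ⟨x, hx, rfl⟩ := hy
    exact h hx
  refine Kt_le_of_forall_tmul_ιMulti_mem fun f m => ?_
  rw [LinearMap.mem_ker, LinearMap.comp_apply, hD.2, map_sum]
  refine Finset.sum_eq_zero fun j _ => ?_
  rw [map_zsmul, koszulPairing_tmul_ιMulti,
    homogeneousComponent_mul_eq_zero_of_lt f (m j).2 one_lt_two, zero_mul, smul_zero]

theorem zel_eq_sum_apply_zero (a : Fin (t + 1) → S1 k n) (b : Fin t → S1 k n) :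
    zel t a b = (-1 : ℤ) ^ t • ∑ σ : Equiv.Perm (Fin (t + 1)),
      (Equiv.Perm.sign σ : ℤ) • ((a (σ 0) : S k n) ⊗ₜ[k]
        ExteriorAlgebra.ιMulti k t fun j => mulW (b j) (a (σ j.succ))) := by
  rw [zel, ← Equiv.sum_comp (Equiv.mulRight (finRotate (t + 1))), Finset.smul_sum]
  refine Finset.sum_congr rfl fun σ _ => ?_
  have rotate_castSucc (j : Fin t) : finRotate (t + 1) j.castSucc = j.succ := finRotate_of_lt j.2
  simp [rotate_castSucc, mul_smul, mul_comm]

theorem koszulPairing_zel (δ : Fin t → Derivation k (S k n) (S k n))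
    (a : Fin (t + 1) → S1 k n) (b : Fin t → S1 k n) :
    koszulPairing δ (zel t a b) = ((-1) ^ t * t.factorial : ℤ) •
      ((∏ j, (b j : S k n)) * (derivationMatrix δ fun l => (a l : S k n)).det) := by
  have linear_part (l : Fin (t + 1)) : homogeneousComponent 1 (a l : S k n) = a l :=
    homogeneousComponent_eq_self (a l).2
  simp only [zel_eq_sum_apply_zero, map_zsmul, map_sum, koszulPairing_tmul_ιMulti, linear_part,
    jacobianDet_apply, mulW]
  rw [sum_sign_smul_mul_sum_sign_smul_prod_derivation δ (fun l => (a l : S k n)) fun j => b j,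
    mul_smul, natCast_zsmul]

/-- The coefficient of `x_{A_0} x_{B_1} ⋯ x_{B_t}` in the Koszul pairing with
`∂/∂x_{A_1}, …, ∂/∂x_{A_t}`. Up to the factor `± t!`, these functionals are dual to the
semistandard cycles. -/
def dualFunctional (A : Fin (t + 1) → Fin n) (B : Fin t → Fin n) : KK k n →ₗ[k] k :=
  lcoeff k (consExponent (A 0) B) ∘ₗ koszulPairing fun j => pderiv (A j.succ)

theorem dualFunctional_eq_zero_of_mem_boundaries (A : Fin (t + 1) → Fin n) (B : Fin t → Fin n)
    {D : ℕ → KK k n →ₗ[k] KK k n} (hD : IsKoszulDiff D) {y : KK k n}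
    (hy : y ∈ (Kt k n (t + 1)).map (D (t + 1))) : dualFunctional A B y = 0 := by
  rw [dualFunctional, LinearMap.comp_apply, koszulPairing_eq_zero_of_mem_boundaries _ hD hy,
    map_zero]

theorem dualFunctional_zel (A a : Fin (t + 1) → Fin n) (B b : Fin t → Fin n) :
    dualFunctional A B (zel t (fun l => (xv (a l) : S1 k n)) fun l => xv (b l)) =
      ((-1) ^ t * t.factorial : ℤ) • coeff (consExponent (A 0) B) ((∏ j, X (b j)) *
        (derivationMatrix (fun j : Fin t => pderiv (R := k) (A j.succ)) fun l => X (a l)).det) := by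
  simp only [dualFunctional, LinearMap.comp_apply, koszulPairing_zel, map_zsmul, lcoeff_apply, xv]

theorem dualFunctional_zel_self {A : Fin (t + 1) → Fin n} (hA : Function.Injective A)
    (B : Fin t → Fin n) :
    dualFunctional A B (zel t (fun l => (xv (A l) : S1 k n)) fun l => xv (B l)) =
      (-1) ^ t * t.factorial := by
  rw [dualFunctional_zel, det_derivationMatrix_pderiv_self hA, prod_X_mul_X_eq_monomial,
    coeff_monomial, if_pos rfl, zsmul_one]
  norm_num

theorem dualFunctional_zel_of_ne {A a : Fin (t + 1) → Fin n} {B b : Fin t → Fin n}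
    (hAB : Semistandard A B) (hab : Semistandard a b) (hne : (a, b) ≠ (A, B)) :
    dualFunctional A B (zel t (fun l => (xv (a l) : S1 k n)) fun l => xv (b l)) = 0 := by
  rw [dualFunctional_zel, smul_eq_zero_of_right]
  by_contra hcoeff
  obtain ⟨σ, hσ, hexp⟩ := exists_perm_of_coeff_det_ne_zero hcoeff
  obtain ⟨rfl, rfl⟩ := hAB.eq_of_perm_of_consExponent_eq hab hσ hexp
  exact hne rfl

end KoszulPairing

theorem semistandard_zel_linearly_independent_general (t : ℕ) (ht : (t.factorial : k) ≠ 0)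
    (c : ((Fin (t + 1) → Fin n) × (Fin t → Fin n)) → k)
    (hsupp : ∀ p, ¬ Semistandard p.1 p.2 → c p = 0)
    (D : ℕ → KK k n →ₗ[k] KK k n) (hD : IsKoszulDiff D)
    (hbound : (∑ p : (Fin (t + 1) → Fin n) × (Fin t → Fin n),
        c p • (zel t (fun l => (xv (p.1 l) : S1 k n)) (fun l => xv (p.2 l)) : KK k n)) ∈
      Submodule.map (D (t + 1)) (Kt k n (t + 1))) :
    ∀ p, c p = 0 := by
  rintro ⟨A, B⟩
  by_cases hAB : Semistandard A B; swap
  · exact hsupp _ hAB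
  have dual_eq_zero := dualFunctional_eq_zero_of_mem_boundaries A B hD hbound
  rw [map_sum, Finset.sum_eq_single (A, B)] at dual_eq_zero
  · rw [map_smul, dualFunctional_zel_self hAB.1.injective] at dual_eq_zero
    simpa [ht] using dual_eq_zero
  · rintro ⟨a, b⟩ - hne
    by_cases hab : Semistandard a b
    · rw [map_smul, dualFunctional_zel_of_ne hAB hab hne, smul_zero]
    · rw [hsupp _ hab, zero_smul, map_zero]
  · simp

/-- Fix `t ≥ 0`.  If a finite `k`-linear combination `Σ c_{(a,b)} z_{a,b}`
over distinct semistandard pairs `(a,b)` of sequences of variables (with `|a| = t+1`,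
`|b| = t`) is a Koszul boundary, i.e. lies in the image of `d_{t+1} : K_{t+1} → K_t`, then
all coefficients vanish; i.e. the classes of the semistandard `z_{a,b}` are linearly
independent in `H_t(𝔪²)`. -/
theorem semistandard_zel_linearly_independent (k : Type) [Field k] [CharZero k] (n : ℕ)
    (t : ℕ) (c : ((Fin (t+1) → Fin n) × (Fin t → Fin n)) → k)
    (hsupp : ∀ p, ¬ Semistandard p.1 p.2 → c p = 0)
    (D : ℕ → KK k n →ₗ[k] KK k n) (hD : IsKoszulDiff D)
    (hbound : (∑ p : (Fin (t+1) → Fin n) × (Fin t → Fin n),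
        c p • (zel t (fun l => (xv (p.1 l) : S1 k n)) (fun l => xv (p.2 l)) : KK k n)) ∈
      Submodule.map (D (t+1)) (Kt k n (t+1))) :
    ∀ p, c p = 0 :=
  semistandard_zel_linearly_independent_general t
    (Nat.cast_ne_zero.2 t.factorial_ne_zero) c hsupp D hD hbound

end
end

section
/- There is a sign ε ∈ {+1, -1} such that Z_0 · Z_1 · ⋯ · Z_{n-1} = ε·T + E, where T := x_1x_2⋯x_n ⊗ ⋀_{i=1}^n (⋀_{j=1}^{i-1} x_jx_i) ∈ K_N with N = n(n-1)/2, and E is a k-linear combination of elements of the form f ⊗ m_1 ∧ ⋯ ∧ m_N in which f and the quadratic monomials m_1, …, m_N are monomials and at least one m_l equals x_i² for some i; in particular, T is the unique square-free term of the product and it occurs with coefficient ±1. -/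
set_option maxHeartbeats 1000000
set_option synthInstance.maxHeartbeats 400000

open scoped TensorProduct
open MvPolynomial

noncomputable section

variable (k : Type) [Field k] (n : ℕ)

variable {k n}

variable (k n)

variable {k n}

variable (k n) in
/-- The wedge `⋀_{i=1}^n (⋀_{j=1}^{i-1} x_j x_i)` (factors in increasing order of `i`,
and within each `i` in increasing order of `j`), an element of `⋀^N S_2 ⊆ Λ(S_2)`. -/
def wedgeT : ExteriorAlgebra k (S2 k n) :=
  ((List.finRange n).map (fun i =>
    ((((List.finRange n).filter (fun j => j < i)).map
      (fun j => ExteriorAlgebra.ι k (q j i : S2 k n))).prod))).prod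

/-!
In `Z_i` every summand but the last contains the factor `x_i²`, and the last one is
`± x_i ⊗ ⋀_{j < i} x_j x_i`. The combinations of terms having a square factor absorb products with
arbitrary terms on both sides, so they behave like a graded ideal, and modulo this ideal the product
of the `Z_i` is the product of their last summands. The sign is `(-1) ^ (0 + 1 + ⋯ + (n - 1))`.
-/

theorem list_prod_map_smul {ι R A : Type*} [CommMonoid R] [Monoid A] [MulAction R A]
    [IsScalarTower R A A] [SMulCommClass R A A] (l : List ι) (c : ι → R) (a : ι → A) :
    (l.map fun i => c i • a i).prod = (l.map c).prod • (l.map a).prod := by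
  induction l with
  | nil => simp
  | cons i l ih => simp only [List.map_cons, List.prod_cons, ih, smul_mul_smul_comm]

theorem list_prod_map_tmul {ι R A B : Type*} [CommSemiring R] [Semiring A] [Algebra R A]
    [Semiring B] [Algebra R B] (l : List ι) (a : ι → A) (b : ι → B) :
    (l.map fun i => a i ⊗ₜ[R] b i).prod = (l.map a).prod ⊗ₜ[R] (l.map b).prod := by
  induction l with
  | nil => rfl
  | cons i l ih =>
    simp only [List.map_cons, List.prod_cons, ih, Algebra.TensorProduct.tmul_mul_tmul]

theorem list_prod_map_sub_list_prod_map_mem {ι κ A σ τ : Type*} [AddMonoid κ] [Ring A]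
    [SetLike σ A] [SetLike τ A] [AddSubmonoidClass τ A] (P : κ → σ) [SetLike.GradedMonoid P]
    (I : κ → τ) (mul_mem_left : ∀ {i j x y}, x ∈ P i → y ∈ I j → x * y ∈ I (i + j))
    (mul_mem_right : ∀ {i j x y}, x ∈ I i → y ∈ P j → x * y ∈ I (i + j))
    {d : ι → κ} {z a : ι → A} (hz : ∀ i, z i ∈ P (d i)) (ha : ∀ i, a i ∈ P (d i))
    (hza : ∀ i, z i - a i ∈ I (d i)) (l : List ι) :
    (l.map z).prod - (l.map a).prod ∈ I (l.map d).sum := by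
  induction l with
  | nil => simpa only [List.map_nil, sub_self] using zero_mem _
  | cons i l ih =>
    have split : z i * (l.map z).prod - a i * (l.map a).prod =
        z i * ((l.map z).prod - (l.map a).prod) + (z i - a i) * (l.map a).prod := by
      noncomm_ring
    simp only [List.map_cons, List.prod_cons, List.sum_cons, split]
    exact add_mem (mul_mem_left (hz i) ih)
      (mul_mem_right (hza i) (SetLike.list_prod_map_mem_graded l d a fun j _ => ha j))

theorem finRange_filter_lt (i : Fin n) :
    (List.finRange n).filter (· < i) = List.ofFn (Fin.castLE i.isLt.le) := by
  refine List.Pairwise.eq_of_mem_iff (r := (· < ·))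
    ((List.pairwise_lt_finRange n).filter _) (List.pairwise_ofFn.2 fun _ _ h => h) fun j => ?_
  simp only [List.mem_filter, List.mem_finRange, true_and, decide_eq_true_eq, List.mem_ofFn]
  exact ⟨fun h => ⟨⟨j, h⟩, rfl⟩, by rintro ⟨l, rfl⟩; exact l.isLt⟩

theorem list_sum_map_val_finRange (n : ℕ) :
    ((List.finRange n).map fun i : Fin n => (i : ℕ)).sum = n * (n - 1) / 2 := by
  rw [← List.ofFn_eq_map, List.sum_ofFn, Fin.sum_univ_eq_sum_range fun i => i,
    Finset.sum_range_id]

section Tuples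

variable {M : Type*}

/-- The `t`-tuples with all entries in `G`; for `G` the quadratic monomials, these are the tuples of
exterior factors of the terms in `K_t`. -/
def tuplesIn (G : Set M) (t : ℕ) : Set (Fin t → M) :=
  {m | ∀ l, m l ∈ G}

/-- The `t`-tuples with all entries in `G` and at least one of them in `H`; for `H` the squares of
the variables, these index the terms that are not square-free. -/
def tuplesInMeeting (G H : Set M) (t : ℕ) : Set (Fin t → M) :=
  {m | (∀ l, m l ∈ G) ∧ ∃ l, m l ∈ H}

variable {G H : Set M} {s t : ℕ} {a : Fin s → M} {b : Fin t → M}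

theorem append_mem_tuplesIn (ha : a ∈ tuplesIn G s) (hb : b ∈ tuplesIn G t) :
    Fin.append a b ∈ tuplesIn G (s + t) := by
  refine Fin.addCases (fun l => ?_) (fun l => ?_)
  · simpa only [Fin.append_left] using ha l
  · simpa only [Fin.append_right] using hb l

theorem append_mem_tuplesInMeeting_left (ha : a ∈ tuplesInMeeting G H s) (hb : b ∈ tuplesIn G t) :
    Fin.append a b ∈ tuplesInMeeting G H (s + t) := by
  obtain ⟨haG, l, hl⟩ := ha
  exact ⟨append_mem_tuplesIn haG hb, Fin.castAdd t l, by rwa [Fin.append_left]⟩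

theorem append_mem_tuplesInMeeting_right (ha : a ∈ tuplesIn G s) (hb : b ∈ tuplesInMeeting G H t) :
    Fin.append a b ∈ tuplesInMeeting G H (s + t) := by
  obtain ⟨hbG, l, hl⟩ := hb
  exact ⟨append_mem_tuplesIn ha hbG, Fin.natAdd s l, by rwa [Fin.append_right]⟩

end Tuples

section TermSpan

variable {R M : Type*} [CommRing R] [AddCommGroup M] [Module R M] (σ : Type*)

/-- The span of the terms `x^u ⊗ m_1 ∧ ⋯ ∧ m_t` whose tuple of exterior factors `(m_1, …, m_t)` lies
in `C`. A set of tuples, rather than of factors, is prescribed so that the same definition covers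
the condition that some factor is a square. -/
def termSpan {t : ℕ} (C : Set (Fin t → M)) :
    Submodule R (MvPolynomial σ R ⊗[R] ExteriorAlgebra R M) :=
  Submodule.span R {w | ∃ (u : σ →₀ ℕ) (m : Fin t → M), m ∈ C ∧
    w = monomial u (1 : R) ⊗ₜ[R] ExteriorAlgebra.ιMulti R t m}

variable {σ}

theorem X_tmul_ιMulti_mem_termSpan {t : ℕ} {C : Set (Fin t → M)} (i : σ) {m : Fin t → M}
    (hm : m ∈ C) : (X i : MvPolynomial σ R) ⊗ₜ[R] ExteriorAlgebra.ιMulti R t m ∈ termSpan σ C :=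
  Submodule.subset_span ⟨Finsupp.single i 1, m, hm, rfl⟩

theorem termSpan_mono {t : ℕ} {C D : Set (Fin t → M)} (h : C ⊆ D) :
    termSpan (R := R) σ C ≤ termSpan σ D :=
  Submodule.span_mono fun _ ⟨u, m, hm, hw⟩ => ⟨u, m, h hm, hw⟩

theorem mul_mem_termSpan {s t : ℕ} {C : Set (Fin s → M)} {D : Set (Fin t → M)}
    {F : Set (Fin (s + t) → M)} (hF : ∀ a ∈ C, ∀ b ∈ D, Fin.append a b ∈ F)
    {x y : MvPolynomial σ R ⊗[R] ExteriorAlgebra R M} (hx : x ∈ termSpan σ C)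
    (hy : y ∈ termSpan σ D) : x * y ∈ termSpan σ F := by
  have hxy := Submodule.mul_mem_mul hx hy
  rw [termSpan, termSpan, Submodule.span_mul_span] at hxy
  refine Submodule.span_mono ?_ hxy
  rintro _ ⟨_, ⟨u, a, ha, rfl⟩, _, ⟨v, b, hb, rfl⟩, rfl⟩
  refine ⟨u + v, Fin.append a b, hF a ha b hb, ?_⟩
  simp only [Algebra.TensorProduct.tmul_mul_tmul, monomial_mul, mul_one,
    ExteriorAlgebra.ιMulti_mul_ιMulti]

variable {G H : Set M}

instance termSpan_tuplesIn_gradedMonoid :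
    SetLike.GradedMonoid fun t => termSpan (R := R) σ (tuplesIn G t) where
  one_mem := Submodule.subset_span ⟨0, Fin.elim0, fun l => l.elim0, by
    rw [ExteriorAlgebra.ιMulti_zero_apply]; rfl⟩
  mul_mem _ _ _ _ := mul_mem_termSpan fun _ ha _ hb => append_mem_tuplesIn ha hb

theorem list_prod_map_sub_mem_termSpan_tuplesInMeeting {ι : Type*} {d : ι → ℕ}
    {z a : ι → MvPolynomial σ R ⊗[R] ExteriorAlgebra R M}
    (ha : ∀ i, a i ∈ termSpan σ (tuplesIn G (d i)))
    (hza : ∀ i, z i - a i ∈ termSpan σ (tuplesInMeeting G H (d i))) (l : List ι) :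
    (l.map z).prod - (l.map a).prod ∈ termSpan σ (tuplesInMeeting G H (l.map d).sum) := by
  refine list_prod_map_sub_list_prod_map_mem (fun t => termSpan (R := R) σ (tuplesIn G t))
    (fun t => termSpan σ (tuplesInMeeting G H t))
    (mul_mem_termSpan fun _ ha _ hb => append_mem_tuplesInMeeting_right ha hb)
    (mul_mem_termSpan fun _ ha _ hb => append_mem_tuplesInMeeting_left ha hb)
    (fun i => ?_) ha hza l
  rw [← sub_add_cancel (z i) (a i)]
  exact add_mem (termSpan_mono (fun _ hm => hm.1) (hza i)) (ha i)

end TermSpan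

variable (k n) in
/-- The monomials `x_i x_j` of degree two, the allowed exterior factors of a term. -/
def quadMonomials : Set (S2 k n) :=
  {m | ∃ i j, m = q i j}

variable (k n) in
/-- The squares `x_i²` of the variables, the factors excluded from a square-free term. -/
def squareMonomials : Set (S2 k n) :=
  {m | ∃ i, m = q i i}

variable (k) in
/-- The block `⋀_{j < i} x_j x_i` of `wedgeT`, indexed by `Fin i` like the wedges in `Zel i`. -/
def wedgeBlock (i : Fin n) : ExteriorAlgebra k (S2 k n) :=
  ExteriorAlgebra.ιMulti k i fun l => q (Fin.castLE i.isLt.le l) i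

theorem wedgeT_eq_list_prod_map_wedgeBlock :
    wedgeT k n = ((List.finRange n).map (wedgeBlock k)).prod := by
  simp only [wedgeT, finRange_filter_lt, List.map_ofFn]
  rfl

theorem X_tmul_wedgeBlock_mem_termSpan (i : Fin n) :
    (X i : S k n) ⊗ₜ[k] wedgeBlock k i ∈ termSpan (Fin n) (tuplesIn (quadMonomials k n) i) :=
  X_tmul_ιMulti_mem_termSpan i fun _ => ⟨_, _, rfl⟩

theorem X_tmul_ιMulti_succAbove_last (i : Fin n) :
    (X (Fin.castLE i.isLt (Fin.last i)) : S k n) ⊗ₜ[k] ExteriorAlgebra.ιMulti k (i : ℕ)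
        (fun l => q (Fin.castLE i.isLt ((Fin.last (i : ℕ)).succAbove l)) i) =
      (X i : S k n) ⊗ₜ[k] wedgeBlock k i := by
  simp only [Fin.succAbove_last]
  rfl

theorem X_tmul_ιMulti_succAbove_castSucc_mem_termSpan (i : Fin n) (j : Fin i) :
    (X (Fin.castLE i.isLt j.castSucc) : S k n) ⊗ₜ[k] ExteriorAlgebra.ιMulti k (i : ℕ)
        (fun l => q (Fin.castLE i.isLt (j.castSucc.succAbove l)) i) ∈
      termSpan (Fin n) (tuplesInMeeting (quadMonomials k n) (squareMonomials k n) i) := by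
  obtain ⟨l, hl⟩ := Fin.exists_succAbove_eq (Fin.castSucc_lt_last j).ne'
  have square_factor : (q (Fin.castLE i.isLt (j.castSucc.succAbove l)) i : S2 k n) = q i i := by
    rw [hl]
    rfl
  exact X_tmul_ιMulti_mem_termSpan _ ⟨fun _ => ⟨_, _, rfl⟩, l, i, square_factor⟩

theorem Zel_sub_mem_termSpan (i : Fin n) :
    Zel i - (-1 : ℤ) ^ (i : ℕ) • ((X i : S k n) ⊗ₜ[k] wedgeBlock k i) ∈
      termSpan (Fin n) (tuplesInMeeting (quadMonomials k n) (squareMonomials k n) i) := by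
  rw [Zel, Fin.sum_univ_castSucc, X_tmul_ιMulti_succAbove_last, Fin.val_last, add_sub_cancel_right]
  exact sum_mem fun j _ => zsmul_mem (X_tmul_ιMulti_succAbove_castSucc_mem_termSpan i j) _

theorem list_prod_map_smul_X_tmul_wedgeBlock :
    ((List.finRange n).map fun i : Fin n =>
      (-1 : ℤ) ^ (i : ℕ) • ((X i : S k n) ⊗ₜ[k] wedgeBlock k i)).prod =
      (-1 : ℤ) ^ (n * (n - 1) / 2) • ((∏ i, X i) ⊗ₜ[k] wedgeT k n) := by
  have sign_prod : ((List.finRange n).map fun i : Fin n => (-1 : ℤ) ^ (i : ℕ)).prod =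
      (-1) ^ (n * (n - 1) / 2) := by
    rw [← list_sum_map_val_finRange, ← List.ofFn_eq_map, ← List.ofFn_eq_map, List.prod_ofFn,
      List.sum_ofFn, Finset.prod_pow_eq_pow_sum]
  rw [list_prod_map_smul, list_prod_map_tmul, sign_prod, wedgeT_eq_list_prod_map_wedgeBlock,
    ← List.ofFn_eq_map (f := fun i => (X i : S k n)), List.prod_ofFn]

theorem full_product_unique_squarefree_term_general (k : Type) [Field k] (n : ℕ) :
    ((List.finRange n).map (fun i => (Zel i : KK k n))).prod -
        (-1 : ℤ) ^ (n * (n - 1) / 2) • ((∏ i, X i) ⊗ₜ[k] wedgeT k n) ∈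
      termSpan (Fin n)
        (tuplesInMeeting (quadMonomials k n) (squareMonomials k n) (n * (n - 1) / 2)) := by
  rw [← list_prod_map_smul_X_tmul_wedgeBlock, ← list_sum_map_val_finRange]
  exact list_prod_map_sub_mem_termSpan_tuplesInMeeting
    (fun i => zsmul_mem (X_tmul_wedgeBlock_mem_termSpan i) _) Zel_sub_mem_termSpan _

/-- There is a sign `ε ∈ {+1,-1}` with
`Z_0 · Z_1 ⋯ Z_{n-1} = ε T + E`, where `T = x_1 ⋯ x_n ⊗ ⋀_{i=1}^n (⋀_{j=1}^{i-1} x_j x_i)`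
and `E` is a `k`-linear combination of elements `f ⊗ m_1 ∧ ⋯ ∧ m_N` in which `f` and the
quadratic monomials `m_1, …, m_N` are monomials and at least one `m_l` equals `x_i²`
for some `i`. -/
theorem full_product_unique_squarefree_term (k : Type) [Field k] [CharZero k] (n : ℕ) :
    ∃ ε : ℤ, (ε = 1 ∨ ε = -1) ∧
      ∃ E ∈ Submodule.span k {w : KK k n |
          ∃ (u : Fin n →₀ ℕ) (m : Fin (n*(n-1)/2) → S2 k n),
            (∀ l, ∃ i j : Fin n, m l = q i j) ∧
            (∃ l, ∃ i : Fin n, m l = q i i) ∧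
            w = (monomial u (1:k) : S k n) ⊗ₜ[k]
              (ExteriorAlgebra.ιMulti k (n*(n-1)/2) m : ExteriorAlgebra k (S2 k n))},
        ((List.finRange n).map (fun i => (Zel i : KK k n))).prod =
          ε • ((∏ i : Fin n, (X i : S k n)) ⊗ₜ[k] wedgeT k n) + E := by
  refine ⟨(-1) ^ (n * (n - 1) / 2), neg_one_pow_eq_or ℤ _, _, ?_, (add_sub_cancel _ _).symm⟩
  simp only [← and_assoc]
  exact full_product_unique_squarefree_term_general k n

end
end
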